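/- Let {X_i : i ∈ 𝒥} be an m-dependent random field indexed by a finite set 𝒥 ⊆ ℤ^d, with E X_i = 0 and E|X_i|^p < ∞ for some 2 < p ≤ 3, and assume E W² = 1 where W = Σ_{i∈𝒥} X_i. Then sup_{z∈ℝ} |F(z) − Φ(z)| ≤ 75 (10m + 1)^{(p−1)d} Σ_{i∈𝒥} E|X_i|^p. -/

import Mathlib

open MeasureTheory ProbabilityTheory Real

noncomputable def stdGaussianCDF : ℝ → ℝ :=
  fun z => ∫ x in Set.Iic z, (Real.sqrt (2 * Real.pi))⁻¹ * Real.exp (-x ^ 2 / 2)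

namespace BE

/-- Gaussian weight. -/
noncomputable def ew (x : ℝ) : ℝ := Real.exp (-x ^ 2 / 2)

lemma ew_pos (x : ℝ) : 0 < ew x := Real.exp_pos _

lemma ew_cont : Continuous ew := by unfold ew; fun_prop

lemma ew_integrable : Integrable ew := by
  have := integrable_exp_neg_mul_sq (b := 1/2) (by norm_num)
  refine this.congr (Filter.Eventually.of_forall fun x => ?_)
  simp only [ew]; congr 1; ring

lemma ew_integral : ∫ x, ew x = Real.sqrt (2 * Real.pi) := by
  have := integral_gaussian (1/2)
  rw [show (2 * Real.pi) = Real.pi / (1/2) by ring, ← this]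
  refine integral_congr_ae (Filter.Eventually.of_forall fun x => ?_)
  simp only [ew]; congr 1; ring

lemma ew_neg (x : ℝ) : ew (-x) = ew x := by simp [ew]

lemma ew_tail {w : ℝ} (hw : 0 ≤ w) : w * ∫ x in Set.Ioi w, ew x ≤ ew w := by
  have hd : ∀ x ∈ Set.Ici w, HasDerivAt (fun x => - ew x) (x * ew x) x := by
    intro x _
    have h1 : HasDerivAt (fun x : ℝ => -x ^ 2 / 2) (-x) x := by
      have := ((hasDerivAt_pow 2 x).neg.div_const 2)
      exact this.congr_deriv (by simp; ring)
    exact h1.exp.neg.congr_deriv (by unfold ew; ring)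
  have ht : Filter.Tendsto (fun x => - ew x) Filter.atTop (nhds 0) := by
    have : Filter.Tendsto (fun x : ℝ => -x ^ 2 / 2) Filter.atTop Filter.atBot := by
      have h2 : Filter.Tendsto (fun x : ℝ => x ^ 2) Filter.atTop Filter.atTop :=
        Filter.tendsto_pow_atTop (by norm_num)
      have := (h2.atTop_div_const (r := 2) (by norm_num))
      have := Filter.tendsto_neg_atTop_atBot.comp this
      refine this.congr fun x => ?_
      simp; ring
    have := (Real.tendsto_exp_atBot.comp this).neg
    simpa [ew] using this
  have hIg : IntegrableOn (fun x => x * ew x) (Set.Ioi w) :=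
    integrableOn_Ioi_deriv_of_nonneg' hd
      (fun x hx => mul_nonneg (hw.trans (le_of_lt hx)) (ew_pos x).le) ht
  have hval := integral_Ioi_of_hasDerivAt_of_tendsto' hd hIg ht
  calc w * ∫ x in Set.Ioi w, ew x = ∫ x in Set.Ioi w, w * ew x := by
        rw [integral_const_mul]
    _ ≤ ∫ x in Set.Ioi w, x * ew x := by
        refine setIntegral_mono_on (ew_integrable.const_mul w).integrableOn hIg
          measurableSet_Ioi fun x hx => ?_
        exact mul_le_mul_of_nonneg_right (le_of_lt hx) (ew_pos x).le
    _ = ew w := by rw [hval]; ring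

lemma ew_tail2 {w : ℝ} (hw : 0 ≤ w) : ∫ x in Set.Ioi w, ew x ≤ 2 * ew w := by
  rcases le_total (1/2) w with h | h
  · have := ew_tail hw
    have h0 : 0 ≤ ∫ x in Set.Ioi w, ew x := integral_nonneg fun x => (ew_pos x).le
    nlinarith
  · have h1 : ∫ x in Set.Ioi w, ew x ≤ ∫ x in Set.Ioi 0, ew x :=
      setIntegral_mono_set ew_integrable.integrableOn
        (Filter.Eventually.of_forall fun x => (ew_pos x).le)
        (Filter.Eventually.of_forall (Set.Ioi_subset_Ioi hw))
    have h2 : ∫ x in Set.Ioi (0:ℝ), ew x = Real.sqrt (2 * Real.pi) / 2 := by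
      have := integral_gaussian_Ioi (1/2)
      rw [show (2 * Real.pi) = Real.pi / (1/2) by ring, ← this]
      refine integral_congr_ae (Filter.Eventually.of_forall fun x => ?_)
      simp only [ew]; congr 1; ring
    have h3 : Real.sqrt (2 * Real.pi) ≤ 2.6 := by
      rw [Real.sqrt_le_left (by norm_num)]
      have := Real.pi_lt_d2
      nlinarith
    have h4 : (7/8 : ℝ) ≤ ew w := by
      have := Real.add_one_le_exp (-w^2/2)
      unfold ew
      nlinarith
    linarith

lemma ew_bound {w T : ℝ} (hT : |T| ≤ ∫ x in Set.Ioi |w|, ew x) :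
    |(ew w)⁻¹ * T| ≤ 2 ∧ |w * ((ew w)⁻¹ * T)| ≤ 1 := by
  have hw := ew_pos w
  have e1 : ew |w| = ew w := by
    rcases abs_choice w with h | h <;> rw [h]
    exact ew_neg w
  have t1 := ew_tail (abs_nonneg w)
  have t2 := ew_tail2 (abs_nonneg w)
  rw [e1] at t1 t2
  rw [abs_mul, abs_mul, abs_mul, abs_of_pos (inv_pos.mpr hw)]
  constructor
  · rw [inv_mul_le_iff₀ hw]; linarith
  · have : |w| * ((ew w)⁻¹ * |T|) = (ew w)⁻¹ * (|w| * |T|) := by ring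
    rw [this, inv_mul_le_iff₀ hw, mul_one]
    exact (mul_le_mul_of_nonneg_left hT (abs_nonneg w)).trans t1

/-- standard Gaussian density -/
noncomputable def gd (x : ℝ) : ℝ := (Real.sqrt (2 * Real.pi))⁻¹ * ew x

lemma gd_integral : ∫ x, gd x = 1 := by
  unfold gd
  rw [integral_const_mul, ew_integral]
  have : 0 < Real.sqrt (2 * Real.pi) := Real.sqrt_pos.mpr (by positivity)
  field_simp

lemma gd_integrable : Integrable gd := ew_integrable.const_mul _

lemma gd_nonneg (x : ℝ) : 0 ≤ gd x := mul_nonneg (by positivity) (ew_pos x).le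

lemma gd_le (x : ℝ) : gd x ≤ 1/2 := by
  unfold gd
  have h1 : ew x ≤ 1 := by
    unfold ew; rw [Real.exp_le_one_iff]; nlinarith [sq_nonneg x]
  have h2 : 2 ≤ Real.sqrt (2 * Real.pi) := by
    apply Real.le_sqrt_of_sq_le
    have := Real.pi_gt_three
    nlinarith
  rw [inv_mul_le_iff₀ (by linarith)]
  linarith

lemma stein_exists (h : ℝ → ℝ) (hc : Continuous h) (h0 : ∀ x, 0 ≤ h x) (h1 : ∀ x, h x ≤ 1) :
    ∃ f f' : ℝ → ℝ, (∀ w, HasDerivAt f (f' w) w) ∧ Continuous f' ∧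
      (∀ w, f' w = w * f w + h w - ∫ x, h x * gd x) ∧
      (∀ w, |f w| ≤ 2) ∧ (∀ w, |w * f w| ≤ 1) ∧ (∀ w, |f' w| ≤ 2) := by
  set N := ∫ x, h x * gd x with hN
  have hgi : Integrable (fun x => h x * gd x) := by
    refine gd_integrable.mono' (by unfold gd; exact (hc.mul (continuous_const.mul ew_cont)).aestronglyMeasurable) ?_
    refine Filter.Eventually.of_forall fun x => ?_
    rw [Real.norm_eq_abs, abs_of_nonneg (mul_nonneg (h0 x) (gd_nonneg x))]
    exact mul_le_of_le_one_left (gd_nonneg x) (h1 x)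
  have N0 : 0 ≤ N := integral_nonneg fun x => mul_nonneg (h0 x) (gd_nonneg x)
  have N1 : N ≤ 1 := by
    rw [← gd_integral]
    exact integral_mono hgi gd_integrable fun x => mul_le_of_le_one_left (gd_nonneg x) (h1 x)
  let u : ℝ → ℝ := fun x => (h x - N) * ew x
  have hu_cont : Continuous u := (hc.sub continuous_const).mul ew_cont
  have hu_le : ∀ x, |u x| ≤ ew x := by
    intro x
    simp only [u]
    rw [abs_mul, abs_of_pos (ew_pos x)]
    refine mul_le_of_le_one_left (ew_pos x).le ?_
    rw [abs_le]; constructor <;> linarith [h0 x, h1 x]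
  have hu_int : Integrable u :=
    ew_integrable.mono' hu_cont.aestronglyMeasurable (Filter.Eventually.of_forall hu_le)
  have hu_tot : ∫ x, u x = 0 := by
    have e : ∀ x, u x = Real.sqrt (2 * Real.pi) * (h x * gd x - N * gd x) := by
      intro x
      have : Real.sqrt (2 * Real.pi) ≠ 0 := (Real.sqrt_pos.mpr (by positivity)).ne'
      simp only [u, gd]
      field_simp
    simp_rw [e]
    rw [integral_const_mul, integral_sub hgi (gd_integrable.const_mul N), integral_const_mul,
      gd_integral, ← hN]
    ring
  let G : ℝ → ℝ := fun w => ∫ x in Set.Iic w, u x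
  have hG : ∀ w, HasDerivAt G (u w) w := by
    intro w
    have e : G = fun w => (∫ x in Set.Iic 0, u x) + ∫ x in (0:ℝ)..w, u x := by
      funext w
      have := intervalIntegral.integral_Iic_sub_Iic (a := 0) (b := w) (f := u) (μ := volume)
        hu_int.integrableOn hu_int.integrableOn
      simp only [G]; linarith
    rw [e]
    have := intervalIntegral.integral_hasDerivAt_right (hu_cont.intervalIntegrable 0 w)
      (hu_cont.stronglyMeasurableAtFilter _ _) hu_cont.continuousAt
    exact this.const_add _
  have hGb : ∀ w, |G w| ≤ ∫ x in Set.Ioi |w|, ew x := by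
    intro w
    rcases le_total 0 w with hw | hw
    · rw [abs_of_nonneg hw]
      have e : G w = - ∫ x in Set.Ioi w, u x := by
        have := intervalIntegral.integral_Iic_add_Ioi (b := w) (f := u) (μ := volume)
          hu_int.integrableOn hu_int.integrableOn
        rw [hu_tot] at this
        simp only [G]; linarith
      rw [e, abs_neg]
      refine (abs_integral_le_integral_abs).trans ?_
      exact integral_mono hu_int.abs.integrableOn ew_integrable.integrableOn hu_le
    · rw [abs_of_nonpos hw]
      refine (abs_integral_le_integral_abs).trans ?_
      have : ∫ x in Set.Ioi (-w), ew x = ∫ x in Set.Iic w, ew x := by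
        rw [← integral_comp_neg_Iic]
        simp [ew_neg]
      rw [this]
      exact integral_mono hu_int.abs.integrableOn ew_integrable.integrableOn hu_le
  let f : ℝ → ℝ := fun w => (ew w)⁻¹ * G w
  have hfd : ∀ w, HasDerivAt f (w * f w + h w - N) w := by
    intro w
    have e1 : HasDerivAt (fun w => (ew w)⁻¹) (w * (ew w)⁻¹) w := by
      have e : (fun w => (ew w)⁻¹) = fun w : ℝ => Real.exp (w^2/2) := by
        funext w; unfold ew; rw [← Real.exp_neg]; congr 1; ring
      have hh : HasDerivAt (fun x : ℝ => x ^ 2 / 2) w w := by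
        exact ((hasDerivAt_pow 2 w).div_const 2).congr_deriv (by simp)
      have := hh.exp
      rw [← e] at this
      exact this.congr_deriv (by rw [congrFun e w]; ring)
    refine (e1.mul (hG w)).congr_deriv ?_
    have := (ew_pos w).ne'
    change w * (ew w)⁻¹ * G w + (ew w)⁻¹ * ((h w - N) * ew w) = w * ((ew w)⁻¹ * G w) + h w - N
    field_simp
    ring
  have b1 : ∀ w, |f w| ≤ 2 := fun w => (ew_bound (hGb w)).1
  have b2 : ∀ w, |w * f w| ≤ 1 := fun w => (ew_bound (hGb w)).2
  have hfc : Continuous f := continuous_iff_continuousAt.mpr fun w => (hfd w).continuousAt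
  refine ⟨f, fun w => w * f w + h w - N, hfd, ?_, fun w => rfl, b1, b2, ?_⟩
  · exact ((continuous_id.mul hfc).add hc).sub continuous_const
  · intro w
    have := abs_le.mp (b2 w)
    rw [abs_le]; constructor <;> linarith [h0 w, h1 w]

lemma cdf_eq (z : ℝ) : stdGaussianCDF z = ∫ x in Set.Iic z, gd x := rfl

lemma cdf_lip {z t : ℝ} (ht : 0 ≤ t) : stdGaussianCDF (z + t) ≤ stdGaussianCDF z + t / 2 := by
  rw [cdf_eq, cdf_eq]
  have := intervalIntegral.integral_Iic_sub_Iic (a := z) (b := z + t) (f := gd) (μ := volume)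
        gd_integrable.integrableOn gd_integrable.integrableOn
  have h2 : ∫ x in z..(z+t), gd x ≤ ∫ x in z..(z+t), (1/2 : ℝ) :=
    intervalIntegral.integral_mono_on (by linarith)
      (gd_integrable.intervalIntegrable) (by simp) (fun x _ => gd_le x)
  simp at h2
  linarith

lemma cdf_bounds (z : ℝ) : 0 ≤ stdGaussianCDF z ∧ stdGaussianCDF z ≤ 1 := by
  rw [cdf_eq]
  refine ⟨integral_nonneg gd_nonneg, ?_⟩
  rw [← gd_integral]
  exact setIntegral_le_integral gd_integrable (Filter.Eventually.of_forall gd_nonneg)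

/-- ramp function -/
noncomputable def rp (α w : ℝ) : ℝ := max 0 (min w α)

lemma rp_cont (α : ℝ) : Continuous (rp α) := by unfold rp; fun_prop

lemma rp_nonneg (α w : ℝ) : 0 ≤ rp α w := le_max_left _ _
lemma rp_le {α : ℝ} (hα : 0 ≤ α) (w : ℝ) : rp α w ≤ α := max_le hα (min_le_right _ _)
lemma rp_mono (α : ℝ) : Monotone (rp α) := fun x y h => by unfold rp; gcongr
lemma rp_zero {α w : ℝ} (hw : w ≤ 0) : rp α w = 0 := by
  unfold rp; exact max_eq_left ((min_le_left _ _).trans hw)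
lemma rp_top {α w : ℝ} (hα : 0 ≤ α) (hw : α ≤ w) : rp α w = α := by
  unfold rp; rw [min_eq_right hw, max_eq_right hα]
lemma rp_mid {α w : ℝ} (h0 : 0 ≤ w) (h1 : w ≤ α) : rp α w = w := by
  unfold rp; rw [min_eq_left h1, max_eq_right h0]

/-- smoothed indicator of (-∞, z] -/
noncomputable def hs (α z w : ℝ) : ℝ := 1 - rp α (w - z) / α

lemma hs_cont (α z : ℝ) : Continuous (hs α z) := by
  unfold hs
  exact continuous_const.sub (((rp_cont α).comp (continuous_id.sub continuous_const)).div_const _)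

lemma hs_nonneg {α : ℝ} (hα : 0 < α) (z w : ℝ) : 0 ≤ hs α z w := by
  have := rp_le hα.le (w - z)
  unfold hs
  rw [sub_nonneg, div_le_one hα]; exact this

lemma hs_le {α : ℝ} (hα : 0 < α) (z w : ℝ) : hs α z w ≤ 1 := by
  have := div_nonneg (rp_nonneg α (w - z)) hα.le
  unfold hs; linarith

lemma hs_one {α z w : ℝ} (h : w ≤ z) : hs α z w = 1 := by
  unfold hs; rw [rp_zero (by linarith)]; simp

lemma hs_zero {α z w : ℝ} (hα : 0 < α) (h : z + α ≤ w) : hs α z w = 0 := by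
  unfold hs; rw [rp_top hα.le (by linarith), div_self hα.ne']; simp

lemma hs_gd_integrable {α : ℝ} (hα : 0 < α) (z : ℝ) : Integrable (fun x => hs α z x * gd x) := by
  refine gd_integrable.mono' (by
    unfold gd; exact ((hs_cont α z).mul (continuous_const.mul ew_cont)).aestronglyMeasurable) ?_
  refine Filter.Eventually.of_forall fun x => ?_
  rw [Real.norm_eq_abs, abs_of_nonneg (mul_nonneg (hs_nonneg hα z x) (gd_nonneg x))]
  exact mul_le_of_le_one_left (gd_nonneg x) (hs_le hα z x)

lemma hs_gd_le {α : ℝ} (hα : 0 < α) (z : ℝ) :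
    ∫ x, hs α z x * gd x ≤ stdGaussianCDF (z + α) := by
  rw [cdf_eq, ← integral_indicator measurableSet_Iic]
  refine integral_mono (hs_gd_integrable hα z) (gd_integrable.indicator measurableSet_Iic) ?_
  intro x
  by_cases hx : x ≤ z + α
  · simp only [Set.indicator, Set.mem_Iic, hx, if_true]
    exact mul_le_of_le_one_left (gd_nonneg x) (hs_le hα z x)
  · simp only [Set.indicator, Set.mem_Iic, hx, if_false]
    rw [hs_zero hα (by linarith)]; simp

lemma le_hs_gd {α : ℝ} (hα : 0 < α) (z : ℝ) :
    stdGaussianCDF z ≤ ∫ x, hs α z x * gd x := by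
  rw [cdf_eq, ← integral_indicator measurableSet_Iic]
  refine integral_mono (gd_integrable.indicator measurableSet_Iic) (hs_gd_integrable hα z) ?_
  intro x
  by_cases hx : x ≤ z
  · simp only [Set.indicator, Set.mem_Iic, hx, if_true]
    rw [hs_one hx]; simp
  · simp only [Set.indicator, Set.mem_Iic, hx, if_false]
    exact mul_nonneg (hs_nonneg hα z x) (gd_nonneg x)

lemma smoothing {Ω : Type*} [MeasurableSpace Ω] {μ : Measure Ω} [IsProbabilityMeasure μ]
    {W : Ω → ℝ} (hW : Measurable W) {α T : ℝ} (hα : 0 < α)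
    (hT : ∀ z, |∫ ω, hs α z (W ω) ∂μ - ∫ x, hs α z x * gd x| ≤ T) (z : ℝ) :
    |(μ {ω | W ω ≤ z}).toReal - stdGaussianCDF z| ≤ T + α / 2 := by
  have hms : MeasurableSet {ω | W ω ≤ z} := measurableSet_le hW measurable_const
  have hIg : ∀ z, Integrable (fun ω => hs α z (W ω)) μ := by
    intro z
    refine (integrable_const (1:ℝ)).mono' ((hs_cont α z).measurable.comp hW).aestronglyMeasurable ?_
    refine Filter.Eventually.of_forall fun x => ?_
    rw [Real.norm_eq_abs, abs_of_nonneg (hs_nonneg hα z _)]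
    exact hs_le hα z _
  have e : (μ {ω | W ω ≤ z}).toReal = ∫ ω, Set.indicator {ω | W ω ≤ z} (fun _ => (1:ℝ)) ω ∂μ := by
    rw [integral_indicator hms]; simp [Measure.real]
  have up : (μ {ω | W ω ≤ z}).toReal ≤ ∫ ω, hs α z (W ω) ∂μ := by
    rw [e]
    refine integral_mono ((integrable_const _).indicator hms) (hIg z) fun ω => ?_
    by_cases hx : W ω ≤ z
    · simp only [Set.indicator, Set.mem_ofPred_eq, hx, if_true]; rw [hs_one hx]
    · simp only [Set.indicator, Set.mem_ofPred_eq, hx, if_false]; exact hs_nonneg hα z _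
  have lo : ∫ ω, hs α (z - α) (W ω) ∂μ ≤ (μ {ω | W ω ≤ z}).toReal := by
    rw [e]
    refine integral_mono (hIg _) ((integrable_const _).indicator hms) fun ω => ?_
    by_cases hx : W ω ≤ z
    · simp only [Set.indicator, Set.mem_ofPred_eq, hx, if_true]; exact hs_le hα _ _
    · simp only [Set.indicator, Set.mem_ofPred_eq, hx, if_false]; rw [hs_zero hα (by linarith)]
  have t1 := abs_le.mp (hT z)
  have t2 := abs_le.mp (hT (z - α))
  have c1 := hs_gd_le hα z
  have c2 := le_hs_gd hα (z - α)
  have l1 := cdf_lip (z := z) hα.le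
  have l2 := cdf_lip (z := z - α) hα.le
  rw [sub_add_cancel] at l2
  rw [abs_le]; constructor <;> linarith

end BE

namespace BE

/-- Stein kernel: `f w - f (w - y) = ∫ f' (w + t) * kf y t`. -/
noncomputable def kf (y t : ℝ) : ℝ :=
  (if -y < t ∧ t ≤ 0 then 1 else 0) - (if 0 < t ∧ t ≤ -y then 1 else 0)

lemma kf_abs_le (y t : ℝ) : |kf y t| ≤ 1 := by
  unfold kf; split_ifs <;> norm_num

lemma kf_sq (y t : ℝ) : kf y t ^ 2 = |kf y t| := by
  unfold kf; split_ifs <;> norm_num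

lemma kf_supp (y t : ℝ) (ht : |t| ≤ 1) : |t| * |kf y t| ≤ min 1 |y| * |kf y t| := by
  unfold kf
  split_ifs with h1 h2 h2
  · linarith [h1.2, h2.1]
  · simp only [sub_zero, abs_one, mul_one]
    refine le_min ht ?_
    rw [abs_of_nonpos h1.2]; exact (by linarith [h1.1] : -t ≤ y).trans (le_abs_self y)
  · simp only [zero_sub, abs_neg, abs_one, mul_one]
    refine le_min ht ?_
    rw [abs_of_pos h2.1]; exact h2.2.trans (neg_le_abs y)
  · simp

lemma kf_meas : Measurable (fun p : ℝ × ℝ => kf p.1 p.2) := by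
  unfold kf
  refine Measurable.sub (Measurable.ite ?_ measurable_const measurable_const)
    (Measurable.ite ?_ measurable_const measurable_const)
  · exact (measurableSet_lt measurable_fst.neg measurable_snd).inter
      (measurableSet_le measurable_snd measurable_const)
  · exact (measurableSet_lt measurable_const measurable_snd).inter
      (measurableSet_le measurable_snd measurable_fst.neg)

/-- clip to [-1,1] -/
noncomputable def clip (y : ℝ) : ℝ := max (-1) (min y 1)

/-- reference measure on (-1,1] -/
noncomputable def nu : Measure ℝ := volume.restrict (Set.Ioc (-1) 1)

instance : IsFiniteMeasure nu := by unfold nu; infer_instance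

lemma nu_ae {P : ℝ → Prop} (h : ∀ t, -1 < t → t ≤ 1 → P t) : ∀ᵐ t ∂nu, P t := by
  unfold nu
  filter_upwards [ae_restrict_mem measurableSet_Ioc] with t ht using h t ht.1 ht.2

lemma kf_int (y : ℝ) (φ : ℝ → ℝ) (hφ : Continuous φ) :
    ∫ t, φ t * kf y t ∂nu = ∫ t in (-clip y)..0, φ t := by
  have e : ∀ t ∈ Set.Ioc (-1:ℝ) 1, φ t * kf y t =
      (Set.Ioc (-clip y) 0).indicator φ t - (Set.Ioc 0 (-clip y)).indicator φ t := by
    intro t ht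
    have i1 : (-y < t ∧ t ≤ 0) ↔ (-clip y < t ∧ t ≤ 0) := by
      unfold clip
      constructor
      · rintro ⟨h1, h2⟩; refine ⟨?_, h2⟩
        have : -t < max (-1) (min y 1) := lt_max_of_lt_right (lt_min (by linarith) (by linarith [ht.1]))
        linarith
      · rintro ⟨h1, h2⟩; refine ⟨?_, h2⟩
        have h3 : -t < max (-1) (min y 1) := by linarith
        rcases lt_max_iff.mp h3 with h | h
        · linarith
        · linarith [(lt_min_iff.mp h).1]
    have i2 : (0 < t ∧ t ≤ -y) ↔ (0 < t ∧ t ≤ -clip y) := by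
      unfold clip
      constructor
      · rintro ⟨h1, h2⟩; refine ⟨h1, ?_⟩
        have : max (-1) (min y 1) ≤ -t := max_le (by linarith [ht.2]) ((min_le_left _ _).trans (by linarith))
        linarith
      · rintro ⟨h1, h2⟩; refine ⟨h1, ?_⟩
        have h3 : max (-1) (min y 1) ≤ -t := by linarith
        have h4 := (le_max_right _ _).trans h3
        rcases min_le_iff.mp h4 with h | h <;> linarith
    unfold kf
    simp only [i1, i2, Set.indicator, Set.mem_Ioc]
    split_ifs <;> simp
  have hc1 : clip y ≤ 1 := max_le (by norm_num) (min_le_right _ _)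
  have hc2 : -1 ≤ clip y := le_max_left _ _
  unfold nu
  rw [setIntegral_congr_fun measurableSet_Ioc e]
  have hi : ∀ a b : ℝ, IntegrableOn φ (Set.Ioc a b) := fun a b =>
    (hφ.integrableOn_Icc (a := a) (b := b)).mono_set Set.Ioc_subset_Icc_self
  rw [integral_sub, intervalIntegral, setIntegral_indicator measurableSet_Ioc,
    setIntegral_indicator measurableSet_Ioc, Set.inter_eq_right.mpr, Set.inter_eq_right.mpr]
  · intro t ht; exact ⟨by linarith [ht.1], by linarith [ht.2]⟩
  · intro t ht; exact ⟨by linarith [ht.1], by linarith [ht.2]⟩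
  · exact ((hi _ _).integrable_indicator measurableSet_Ioc).integrableOn
  · exact ((hi _ _).integrable_indicator measurableSet_Ioc).integrableOn

lemma clip_abs (y : ℝ) : |clip y| = min 1 |y| := by
  unfold clip
  rcases le_total 0 y with h | h
  · rw [abs_of_nonneg h, max_eq_right (by linarith [le_min h zero_le_one]),
      abs_of_nonneg (le_min h zero_le_one), min_comm]
  · rw [min_eq_left (by linarith), abs_of_nonpos h, abs_of_nonpos (max_le (by norm_num) h),
      ← min_neg_neg]; simp

lemma kf_int_one (y : ℝ) : ∫ t, kf y t ∂nu = clip y := by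
  have := kf_int y (fun _ => 1) continuous_const
  simpa using this

lemma kf_int_abs (y : ℝ) : ∫ t, |kf y t| ∂nu = min 1 |y| := by
  rw [← clip_abs]
  rcases le_total 0 y with h | h
  · have e : ∀ t, |kf y t| = kf y t := by
      intro t; apply abs_of_nonneg
      unfold kf
      rw [if_neg (c := 0 < t ∧ t ≤ -y) (by rintro ⟨a, b⟩; linarith)]
      split_ifs <;> norm_num
    simp_rw [e]
    rw [kf_int_one, abs_of_nonneg]
    exact le_max_of_le_right (le_min h zero_le_one)
  · have e : ∀ t, |kf y t| = - kf y t := by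
      intro t; apply abs_of_nonpos
      unfold kf
      rw [if_neg (c := -y < t ∧ t ≤ 0) (by rintro ⟨a, b⟩; linarith)]
      split_ifs <;> norm_num
    simp_rw [e]
    rw [integral_neg, kf_int_one, abs_of_nonpos]
    exact max_le (by norm_num) ((min_le_left _ _).trans h)

lemma clip_sub (y : ℝ) : |y - clip y| ≤ |y| * min 1 |y| := by
  unfold clip
  rcases le_total 1 |y| with h | h
  · rw [min_eq_left h, mul_one]
    rcases le_total 0 y with h0 | h0
    · rw [abs_of_nonneg h0] at h ⊢
      rw [min_eq_right h, max_eq_right (by norm_num), abs_of_nonneg] <;> linarith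
    · rw [abs_of_nonpos h0] at h ⊢
      rw [min_eq_left (by linarith), max_eq_left (by linarith), abs_of_nonpos] <;> linarith
  · have := abs_le.mp h
    rw [min_eq_left this.2, max_eq_right this.1]; simp; positivity

/-- trapezoid -/
noncomputable def tz (α t : ℝ) : ℝ := (rp α (t + α) - rp α (t - α)) / α

lemma tz_cont (α : ℝ) : Continuous (tz α) := by
  unfold tz
  exact (((rp_cont α).comp (continuous_id.add continuous_const)).sub
    ((rp_cont α).comp (continuous_id.sub continuous_const))).div_const _

lemma tz_nonneg {α : ℝ} (hα : 0 < α) (t : ℝ) : 0 ≤ tz α t :=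
  div_nonneg (sub_nonneg.mpr (rp_mono α (by linarith))) hα.le

lemma tz_le {α : ℝ} (hα : 0 < α) (t : ℝ) : tz α t ≤ 1 := by
  unfold tz; rw [div_le_one hα]; linarith [rp_le hα.le (t + α), rp_nonneg α (t - α)]

lemma tz_one {α t : ℝ} (hα : 0 < α) (h0 : 0 ≤ t) (h1 : t ≤ α) : tz α t = 1 := by
  unfold tz; rw [rp_top hα.le (by linarith), rp_zero (by linarith)]; field_simp; simp

lemma tz_zero_left {α t : ℝ} (h : t ≤ -α) (hα : 0 < α) : tz α t = 0 := by
  unfold tz; rw [rp_zero (by linarith), rp_zero (by linarith)]; simp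

lemma tz_zero_right {α t : ℝ} (hα : 0 < α) (h : 2 * α ≤ t) : tz α t = 0 := by
  unfold tz; rw [rp_top hα.le (by linarith), rp_top hα.le (by linarith)]; simp

/-- indicator of [0, α] -/
noncomputable def on (α x : ℝ) : ℝ := (Set.Icc 0 α).indicator (fun _ => 1) x

lemma on_meas (α : ℝ) : Measurable (on α) :=
  measurable_const.indicator measurableSet_Icc

lemma on_nonneg (α x : ℝ) : 0 ≤ on α x := Set.indicator_nonneg (fun _ _ => zero_le_one) x

lemma on_le (α x : ℝ) : on α x ≤ 1 := Set.indicator_le_self' (fun _ _ => zero_le_one) x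

lemma on_le_tz {α : ℝ} (hα : 0 < α) (x : ℝ) : on α x ≤ tz α x := by
  unfold on
  by_cases h : x ∈ Set.Icc 0 α
  · rw [Set.indicator_of_mem h, tz_one hα h.1 h.2]
  · rw [Set.indicator_of_notMem h]; exact tz_nonneg hα x

lemma rp_sub_le {α u v : ℝ} (hα : 0 ≤ α) (huv : u ≤ v) :
    rp α v - rp α u ≤ ∫ s in (0:ℝ)..1, (v - u) * on α (u + s * (v - u)) := by
  have e : ∫ s in (0:ℝ)..1, (v - u) * on α (u + s * (v - u)) = ∫ x in u..v, on α x := by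
    have := intervalIntegral.smul_integral_comp_add_mul (a := 0) (b := 1) (on α) (v - u) u
    rw [intervalIntegral.integral_const_mul]
    simp only [smul_eq_mul, mul_zero, add_zero, mul_one] at this
    rw [show u + (v - u) = v by ring] at this
    rw [← this]
    congr 2; funext s; ring_nf
  rw [e, intervalIntegral.integral_of_le huv]
  unfold on
  rw [setIntegral_indicator measurableSet_Icc]
  simp only [integral_const, smul_eq_mul, mul_one]
  have hsub : Set.Ioc (max u 0) (min v α) ⊆ Set.Ioc u v ∩ Set.Icc 0 α := by
    intro x hx
    exact ⟨⟨(le_max_left _ _).trans_lt hx.1, hx.2.trans (min_le_left _ _)⟩,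
      ⟨((le_max_right _ _).trans_lt hx.1).le, hx.2.trans (min_le_right _ _)⟩⟩
  have h1 : min v α - max u 0 ≤ (volume.restrict (Set.Ioc u v ∩ Set.Icc 0 α)).real Set.univ := by
    rw [measureReal_restrict_apply_univ]
    have h2 : (volume : Measure ℝ).real (Set.Ioc (max u 0) (min v α)) ≤
        (volume : Measure ℝ).real (Set.Ioc u v ∩ Set.Icc 0 α) := by
      refine measureReal_mono hsub ?_
      exact ((measure_mono Set.inter_subset_left).trans_lt measure_Ioc_lt_top).ne
    refine le_trans ?_ h2
    rw [Measure.real, Real.volume_Ioc]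
    rw [ENNReal.toReal_ofReal']; exact le_max_left _ _
  have h0 : 0 ≤ (volume.restrict (Set.Ioc u v ∩ Set.Icc 0 α)).real Set.univ := measureReal_nonneg
  unfold rp
  rcases le_total 0 (min v α) with a | a
  · rw [max_eq_right a]
    rcases le_total u α with c | c
    · rw [min_eq_left c, max_comm 0 u]; exact h1
    · rw [min_eq_right c, min_eq_right (c.trans huv), max_eq_right hα]; simp
  · rw [max_eq_left a]
    have := le_max_left 0 (min u α)
    linarith
end BE

namespace BE

/-- antiderivative of the trapezoid -/
noncomputable def tf (α t : ℝ) : ℝ := ∫ s in (α/2)..t, tz α s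

lemma tf_sub (α x y : ℝ) : tf α x - tf α y = ∫ s in y..x, tz α s := by
  unfold tf
  rw [intervalIntegral.integral_interval_sub_left] <;> exact (tz_cont α).intervalIntegrable _ _

lemma tf_lip {α : ℝ} (hα : 0 < α) (x y : ℝ) : |tf α x - tf α y| ≤ |x - y| := by
  rw [tf_sub]
  have := intervalIntegral.norm_integral_le_of_norm_le_const (a := y) (b := x) (f := tz α) (C := 1)
    (fun s _ => by rw [Real.norm_eq_abs, abs_of_nonneg (tz_nonneg hα s)]; exact tz_le hα s)
  simpa using this

lemma tf_cont {α : ℝ} (hα : 0 < α) : Continuous (tf α) := by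
  have : LipschitzWith 1 (tf α) := LipschitzWith.of_dist_le_mul fun x y => by
    simpa [Real.dist_eq] using tf_lip hα x y
  exact this.continuous

lemma tf_bound {α : ℝ} (hα : 0 < α) (t : ℝ) : |tf α t| ≤ 3/2 * α := by
  have z : tf α (α/2) = 0 := by unfold tf; simp
  have key : ∀ c, |c - α/2| ≤ 3/2 * α → |tf α c| ≤ 3/2*α := by
    intro c hc
    have := tf_lip hα c (α/2)
    rw [z, sub_zero] at this
    linarith
  rcases le_total t (-α) with h | h
  · have e : tf α (-α) - tf α t = 0 := by
      rw [tf_sub]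
      apply intervalIntegral.integral_zero_ae
      refine Filter.Eventually.of_forall fun s hs => ?_
      rw [Set.uIoc_of_le h] at hs
      exact tz_zero_left hs.2 hα
    have := key (-α) (by rw [abs_of_nonpos] <;> linarith)
    rwa [sub_eq_zero.mp e] at this
  · rcases le_total t (2*α) with h' | h'
    · exact key t (by rw [abs_le]; constructor <;> linarith)
    · have e : tf α t - tf α (2*α) = 0 := by
        rw [tf_sub]
        apply intervalIntegral.integral_zero_ae
        refine Filter.Eventually.of_forall fun s hs => ?_
        rw [Set.uIoc_of_le h'] at hs
        exact tz_zero_right hα hs.1.le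
      have := key (2*α) (by rw [abs_of_nonneg] <;> linarith)
      rwa [← sub_eq_zero.mp e] at this

lemma tz_sq_int {α : ℝ} (hα : 0 < α) (x : ℝ) : ∫ t, (tz α (x + t))^2 ∂nu ≤ 3 * α := by
  have hle : ∀ t, (tz α (x + t))^2 ≤ (Set.Icc (-α - x) (2*α - x)).indicator (fun _ => (1:ℝ)) t := by
    intro t
    by_cases h : t ∈ Set.Icc (-α - x) (2*α - x)
    · rw [Set.indicator_of_mem h]
      have := tz_nonneg hα (x + t); have := tz_le hα (x+t); nlinarith
    · rw [Set.indicator_of_notMem h]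
      rw [Set.mem_Icc, not_and_or, not_le, not_le] at h
      rcases h with h | h
      · rw [tz_zero_left (by linarith) hα]; simp
      · rw [tz_zero_right hα (by linarith)]; simp
  have hi : Integrable ((Set.Icc (-α - x) (2*α - x)).indicator (fun _ => (1:ℝ))) volume :=
    (integrable_indicator_iff measurableSet_Icc).mpr (integrableOn_const (by simp))
  calc ∫ t, (tz α (x + t))^2 ∂nu ≤ ∫ t, (Set.Icc (-α - x) (2*α - x)).indicator (fun _ => (1:ℝ)) t ∂nu := by
        refine integral_mono_of_nonneg (Filter.Eventually.of_forall fun t => sq_nonneg _) ?_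
          (Filter.Eventually.of_forall hle)
        exact hi.restrict
    _ ≤ ∫ t, (Set.Icc (-α - x) (2*α - x)).indicator (fun _ => (1:ℝ)) t := by
        exact setIntegral_le_integral hi (Filter.Eventually.of_forall
          (Set.indicator_nonneg (fun _ _ => zero_le_one)))
    _ = 3 * α := by
        rw [integral_indicator measurableSet_Icc]
        simp [Measure.real]
        rw [ENNReal.toReal_ofReal] <;> linarith

/-- pointwise lower bound for a Stein increment -/
lemma tf_incr {α : ℝ} (hα : 0 < α) (w x y : ℝ) :
    ∫ t, tz α (w + t) * (x * kf y t) ∂nu - |x| * (|y| * min 1 |y|) ≤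
      x * (tf α w - tf α (w - y)) := by
  have h1 : ∫ t, tz α (w + t) * (x * kf y t) ∂nu = x * (tf α w - tf α (w - clip y)) := by
    have e : ∀ t, tz α (w + t) * (x * kf y t) = x * (tz α (w + t) * kf y t) := fun t => by ring
    simp_rw [e]
    rw [integral_const_mul, kf_int y (fun t => tz α (w + t))
      ((tz_cont α).comp (continuous_const.add continuous_id)), tf_sub,
      intervalIntegral.integral_comp_add_left]
    simp [sub_eq_add_neg]
  rw [h1]
  have h2 := tf_lip hα (w - y) (w - clip y)
  have h3 := clip_sub y
  have h4 : |tf α (w - y) - tf α (w - clip y)| ≤ |y| * min 1 |y| := by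
    refine h2.trans (le_trans (le_of_eq ?_) h3)
    rw [abs_sub_comm]; congr 1; ring
  have h5 : x * (tf α (w - y) - tf α (w - clip y)) ≤ |x| * (|y| * min 1 |y|) := by
    refine (le_abs_self _).trans ?_
    rw [abs_mul]; exact mul_le_mul_of_nonneg_left h4 (abs_nonneg x)
  linarith

section basic
variable {Ω ι : Type*}

/-- σ-algebra generated by a subfamily -/
@[reducible] def sg (X : ι → Ω → ℝ) (S : Finset ι) : MeasurableSpace Ω :=
  MeasurableSpace.comap (fun ω (a : S) => X a.1 ω) inferInstance

/-- partial sums -/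
def Ws (X : ι → Ω → ℝ) (S : Finset ι) (ω : Ω) : ℝ := ∑ j ∈ S, X j ω

/-- partial absolute sums -/
def Zs (X : ι → Ω → ℝ) (S : Finset ι) (ω : Ω) : ℝ := ∑ j ∈ S, |X j ω|

lemma sg_mono (X : ι → Ω → ℝ) {S T : Finset ι} (h : S ⊆ T) : sg X S ≤ sg X T := by
  unfold sg
  rw [show (fun ω (a : S) => X a.1 ω) =
    (fun (g : T → ℝ) (a : S) => g ⟨a.1, h a.2⟩) ∘ (fun ω (a : T) => X a.1 ω) from rfl,
    ← MeasurableSpace.comap_comp]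
  apply MeasurableSpace.comap_mono
  rw [← measurable_iff_comap_le]
  exact measurable_pi_lambda _ fun a => measurable_pi_apply _

lemma meas_X (X : ι → Ω → ℝ) {S : Finset ι} {j : ι} (h : j ∈ S) : Measurable[sg X S] (X j) := by
  have : X j = (fun (g : S → ℝ) => g ⟨j, h⟩) ∘ (fun ω (a : S) => X a.1 ω) := rfl
  rw [this]
  exact (measurable_pi_apply _).comp (comap_measurable _)

lemma meas_Ws (X : ι → Ω → ℝ) {S T : Finset ι} (h : S ⊆ T) : Measurable[sg X T] (Ws X S) := by
  unfold Ws
  exact Finset.measurable_fun_sum _ fun j hj => meas_X X (h hj)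

lemma meas_Zs (X : ι → Ω → ℝ) {S T : Finset ι} (h : S ⊆ T) : Measurable[sg X T] (Zs X S) := by
  unfold Zs
  exact Finset.measurable_fun_sum _ fun j hj => (continuous_abs.measurable).comp (meas_X X (h hj))

lemma sg_le [mΩ : MeasurableSpace Ω] (X : ι → Ω → ℝ) (hX : ∀ i, Measurable (X i)) (S : Finset ι) : sg X S ≤ mΩ := by
  unfold sg
  rw [← measurable_iff_comap_le]
  exact measurable_pi_lambda _ fun a => hX _

lemma Zs_nonneg (X : ι → Ω → ℝ) (S : Finset ι) (ω : Ω) : 0 ≤ Zs X S ω :=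
  Finset.sum_nonneg fun _ _ => abs_nonneg _

lemma Zs_mono (X : ι → Ω → ℝ) {S T : Finset ι} (h : S ⊆ T) (ω : Ω) : Zs X S ω ≤ Zs X T ω :=
  Finset.sum_le_sum_of_subset_of_nonneg h fun _ _ _ => abs_nonneg _

lemma Ws_le_Zs (X : ι → Ω → ℝ) (S : Finset ι) (ω : Ω) : |Ws X S ω| ≤ Zs X S ω :=
  Finset.abs_sum_le_sum_abs _ _

end basic

section setup
variable {Ω ι : Type*} [mΩ : MeasurableSpace Ω] [Fintype ι] [PseudoMetricSpace ι]

open Classical in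
/-- closed neighbourhood -/
noncomputable def nb (r : ℝ) (i : ι) : Finset ι := Finset.univ.filter fun j => dist i j ≤ r

open Classical in
/-- its complement -/
noncomputable def nbc (r : ℝ) (i : ι) : Finset ι := Finset.univ.filter fun j => ¬ dist i j ≤ r

lemma mem_nb {r : ℝ} {i j : ι} : j ∈ nb r i ↔ dist i j ≤ r := by simp [nb]
lemma mem_nbc {r : ℝ} {i j : ι} : j ∈ nbc r i ↔ r < dist i j := by simp [nbc]

lemma sum_nb (r : ℝ) (i : ι) (f : ι → ℝ) :
    ∑ j ∈ nb r i, f j + ∑ j ∈ nbc r i, f j = ∑ j, f j := by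
  unfold nb nbc
  exact Finset.sum_filter_add_sum_filter_not _ _ _

lemma nb_mono {r s : ℝ} (h : r ≤ s) (i : ι) : nb r i ⊆ nb s i := by
  intro j hj; rw [mem_nb] at *; linarith

/-- The standing assumptions. -/
structure LD (μ : Measure Ω) (X : ι → Ω → ℝ) (m κ b : ℝ) : Prop where
  meas : ∀ i, Measurable (X i)
  l2 : ∀ i, MemLp (X i) 2 μ
  mean : ∀ i, ∫ ω, X i ω ∂μ = 0
  ind : ∀ S T : Finset ι, (∀ i ∈ S, ∀ j ∈ T, m < dist i j) → Indep (sg X S) (sg X T) μ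
  m0 : 0 ≤ m
  card : ∀ i : ι, ((nb (4*m) i).card : ℝ) ≤ κ
  var : ∫ ω, (Ws X Finset.univ ω)^2 ∂μ = 1
  b0 : 0 < b
  b1 : b ≤ 1/75
  H1 : ∑ i, ∫ ω, |X i ω| * Zs X (nb (4*m) i) ω * min 1 (Zs X (nb (4*m) i) ω) ∂μ ≤ b
  H2 : ∑ i, (∫ ω, |X i ω| * Zs X (nb (4*m) i) ω ∂μ) * (∫ ω, min 1 (Zs X (nb (4*m) i) ω) ∂μ) ≤ b
  H3 : κ * ∑ i, ∫ ω, (X i ω)^2 * min 1 (Zs X (nb (4*m) i) ω) ∂μ ≤ b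
  H4 : ∀ i, ∫ ω, (Zs X (nb (4*m) i) ω)^2 ∂μ ≤ 1/9

end setup

section indep
variable {Ω : Type*} {m1 m2 : MeasurableSpace Ω} [mΩ : MeasurableSpace Ω] {μ : Measure Ω}

lemma indepFun_of (h : Indep m1 m2 μ) {f g : Ω → ℝ}
    (hf : Measurable[m1] f) (hg : Measurable[m2] g) : IndepFun f g μ := by
  rw [IndepFun_iff_Indep]
  exact indep_of_indep_of_le_left (indep_of_indep_of_le_right h hg.comap_le) hf.comap_le

lemma indep_mul (h : Indep m1 m2 μ) (h1 : m1 ≤ mΩ) (h2 : m2 ≤ mΩ)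
    {f g : Ω → ℝ} (hf : Measurable[m1] f) (hg : Measurable[m2] g) :
    ∫ ω, f ω * g ω ∂μ = (∫ ω, f ω ∂μ) * ∫ ω, g ω ∂μ :=
  (indepFun_of h hf hg).integral_fun_mul_eq_mul_integral
    (hf.mono h1 le_rfl).aestronglyMeasurable (hg.mono h2 le_rfl).aestronglyMeasurable

lemma indep_integrable (h : Indep m1 m2 μ)
    {f g : Ω → ℝ} (hf : Measurable[m1] f) (hg : Measurable[m2] g)
    (hfi : Integrable f μ) (hgi : Integrable g μ) : Integrable (fun ω => f ω * g ω) μ :=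
  (indepFun_of h hf hg).integrable_mul hfi hgi

end indep
end BE

namespace BE
section
variable {Ω ι : Type*} [mΩ : MeasurableSpace Ω] [Fintype ι] [PseudoMetricSpace ι]
  {μ : Measure Ω} [IsProbabilityMeasure μ] {X : ι → Ω → ℝ} {m κ b : ℝ}

lemma LD.le (hL : LD μ X m κ b) (S : Finset ι) : sg X S ≤ mΩ := sg_le X hL.meas S

lemma LD.Ws_l2 (hL : LD μ X m κ b) (S : Finset ι) : MemLp (Ws X S) 2 μ := by
  have := memLp_finsetSum (μ := μ) (p := 2) S (f := X) (fun i _ => hL.l2 i)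
  exact this

lemma LD.Zs_l2 (hL : LD μ X m κ b) (S : Finset ι) : MemLp (Zs X S) 2 μ := by
  have := memLp_finsetSum (μ := μ) (p := 2) S (f := fun i ω => |X i ω|) (fun i _ => (hL.l2 i).abs)
  exact this

lemma l2_mul {f g : Ω → ℝ} (hf : MemLp f 2 μ) (hg : MemLp g 2 μ) :
    Integrable (fun ω => f ω * g ω) μ := hf.integrable_mul hg

lemma l2_int {f : Ω → ℝ} (hf : MemLp f 2 μ) : Integrable f μ := hf.integrable (by norm_num)

lemma LD.Ws_meas (hL : LD μ X m κ b) (S : Finset ι) : Measurable (Ws X S) :=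
  (meas_Ws X (Finset.Subset.refl S)).mono (hL.le S) le_rfl

lemma LD.Zs_meas (hL : LD μ X m κ b) (S : Finset ι) : Measurable (Zs X S) :=
  (meas_Zs X (Finset.Subset.refl S)).mono (hL.le S) le_rfl

lemma Ws_split (X : ι → Ω → ℝ) (r : ℝ) (i : ι) (ω : Ω) :
    Ws X Finset.univ ω = Ws X (nb r i) ω + Ws X (nbc r i) ω := (sum_nb r i _).symm

lemma LD.EWW (hL : LD μ X m κ b) (i : ι) :
    ∫ ω, |Ws X (nb (4*m) i) ω * Ws X Finset.univ ω| ∂μ ≤ 1/3 := by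
  have h4 := hL.H4 i
  have hv := hL.var
  have i1 := (hL.Zs_l2 (nb (4*m) i)).integrable_sq
  have i2 := (hL.Ws_l2 Finset.univ).integrable_sq
  calc ∫ ω, |Ws X (nb (4*m) i) ω * Ws X Finset.univ ω| ∂μ
      ≤ ∫ ω, (3/2 * (Zs X (nb (4*m) i) ω)^2 + 1/6 * (Ws X Finset.univ ω)^2) ∂μ := by
        refine integral_mono (l2_mul (hL.Ws_l2 _) (hL.Ws_l2 _)).abs
          ((i1.const_mul _).add (i2.const_mul _)) fun ω => ?_
        have h1 := Ws_le_Zs X (nb (4*m) i) ω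
        have h2 := abs_nonneg (Ws X Finset.univ ω)
        have h3 := sq_abs (Ws X Finset.univ ω)
        simp only [abs_mul]
        rw [← h3]
        nlinarith [sq_nonneg (3 * Zs X (nb (4*m) i) ω - |Ws X Finset.univ ω|)]
    _ ≤ 1/3 := by
        rw [integral_add (i1.const_mul _) (i2.const_mul _), integral_const_mul, integral_const_mul, hv]
        linarith

lemma LD.EN (hL : LD μ X m κ b) (i : ι) :
    ∫ ω, |Ws X (nbc (4*m) i) ω| ∂μ ≤ 4/3 := by
  have h4 := hL.H4 i
  have hv := hL.var
  have i1 := (hL.Zs_l2 (nb (4*m) i)).integrable_sq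
  have i2 := (hL.Ws_l2 Finset.univ).integrable_sq
  calc ∫ ω, |Ws X (nbc (4*m) i) ω| ∂μ
      ≤ ∫ ω, ((3/2 * (Zs X (nb (4*m) i) ω)^2 + 1/2 * (Ws X Finset.univ ω)^2) + 2/3) ∂μ := by
        refine integral_mono (l2_int (hL.Ws_l2 _)).abs
          (((i1.const_mul _).add (i2.const_mul _)).add (integrable_const _)) fun ω => ?_
        have h1 := Ws_le_Zs X (nb (4*m) i) ω
        have h3 := sq_abs (Ws X Finset.univ ω)
        have h5 := Ws_split X (4*m) i ω
        have h6 : |Ws X (nbc (4*m) i) ω| ≤ |Ws X Finset.univ ω| + Zs X (nb (4*m) i) ω := by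
          have : Ws X (nbc (4*m) i) ω = Ws X Finset.univ ω - Ws X (nb (4*m) i) ω := by linarith
          rw [this]
          exact (abs_sub _ _).trans (by linarith)
        simp only
        rw [← h3]
        nlinarith [sq_nonneg (3 * Zs X (nb (4*m) i) ω - 1), sq_nonneg (|Ws X Finset.univ ω| - 1)]
    _ ≤ 4/3 := by
        have i3 : Integrable (fun ω => 3/2 * (Zs X (nb (4*m) i) ω)^2 + 1/2 * (Ws X Finset.univ ω)^2) μ :=
          (i1.const_mul _).add (i2.const_mul _)
        rw [integral_add i3 (integrable_const _),
          integral_add (i1.const_mul _) (i2.const_mul _), integral_const_mul, integral_const_mul, hv]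
        simp
        linarith

/-- `X j` against anything measurable w.r.t. the far field has zero mean. -/
lemma LD.zero (hL : LD μ X m κ b) (j : ι) {g : Ω → ℝ} (hg : Measurable[sg X (nbc m j)] g) :
    ∫ ω, X j ω * g ω ∂μ = 0 := by
  have hi := hL.ind {j} (nbc m j) (by
    intro i hi k hk
    rw [Finset.mem_singleton] at hi; subst hi
    exact mem_nbc.mp hk)
  rw [indep_mul hi (hL.le _) (hL.le _) (meas_X X (Finset.mem_singleton_self j)) hg, hL.mean, zero_mul]

lemma LD.EXW (hL : LD μ X m κ b) (j : ι) :
    ∫ ω, X j ω * Ws X Finset.univ ω ∂μ = ∫ ω, X j ω * Ws X (nb m j) ω ∂μ := by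
  have h0 := hL.zero j (meas_Ws X (Finset.Subset.refl (nbc m j)))
  have e : ∀ ω, X j ω * Ws X Finset.univ ω = X j ω * Ws X (nb m j) ω + X j ω * Ws X (nbc m j) ω := by
    intro ω; rw [Ws_split X m j ω]; ring
  simp_rw [e]
  rw [integral_add (l2_mul (hL.l2 j) (hL.Ws_l2 _)) (l2_mul (hL.l2 j) (hL.Ws_l2 _)), h0, add_zero]

/-- Concentration property at scale α with constant q. -/
def PropQ (μ : Measure Ω) (X : ι → Ω → ℝ) (m α q : ℝ) : Prop :=
  ∀ (i : ι) (ξ a : Ω → ℝ), Measurable[sg X (nb (2*m) i)] ξ → Measurable[sg X (nb (2*m) i)] a →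
    (∀ ω, 0 ≤ ξ ω) → Integrable ξ μ →
    ∫ ω, ξ ω * on α (Ws X Finset.univ ω + a ω) ∂μ ≤ q * ∫ ω, ξ ω ∂μ

lemma PropQ.lip (hL : LD μ X m κ b) {α q : ℝ} (hα : 0 < α) (hQ : PropQ μ X m α q) (i : ι)
    {ξ y y' : Ω → ℝ} (hξ : Measurable[sg X (nb (2*m) i)] ξ) (hy : Measurable[sg X (nb (2*m) i)] y)
    (hy' : Measurable[sg X (nb (2*m) i)] y') (h0 : ∀ ω, 0 ≤ ξ ω) (hyy : ∀ ω, y ω ≤ y' ω)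
    (hIg : Integrable (fun ω => ξ ω * (y' ω - y ω)) μ) :
    ∫ ω, ξ ω * (rp α (Ws X Finset.univ ω + y' ω) - rp α (Ws X Finset.univ ω + y ω)) ∂μ ≤
      q * ∫ ω, ξ ω * (y' ω - y ω) ∂μ := by
  set W := Ws X Finset.univ with hW
  have hWm : Measurable W := hL.Ws_meas _
  have hle := hL.le (nb (2*m) i)
  have hξ' := hξ.mono hle le_rfl
  have hym := hy.mono hle le_rfl
  have hym' := hy'.mono hle le_rfl
  let F : Ω → ℝ → ℝ := fun ω s =>
    (ξ ω * (y' ω - y ω)) * on α (W ω + (y ω + s * (y' ω - y ω)))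
  have hFm : Measurable (Function.uncurry F) := by
    have : Measurable fun p : Ω × ℝ => (ξ p.1 * (y' p.1 - y p.1)) *
        on α (W p.1 + (y p.1 + p.2 * (y' p.1 - y p.1))) := by
      have h1 : Measurable fun p : Ω × ℝ => (W p.1 + (y p.1 + p.2 * (y' p.1 - y p.1))) := by
        fun_prop
      have h2 := (on_meas α).comp h1
      have h3 : Measurable fun p : Ω × ℝ => (ξ p.1 * (y' p.1 - y p.1)) := by fun_prop
      exact h3.mul h2
    exact this
  set ν : Measure ℝ := volume.restrict (Set.Ioc 0 1)
  have hFi : Integrable (Function.uncurry F) (μ.prod ν) := by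
    refine (hIg.comp_fst ν).mono' hFm.aestronglyMeasurable (Filter.Eventually.of_forall fun p => ?_)
    simp only [Function.uncurry, F, Real.norm_eq_abs]
    rw [abs_mul, abs_of_nonneg (on_nonneg _ _), abs_of_nonneg (mul_nonneg (h0 _) (sub_nonneg.mpr (hyy _)))]
    exact mul_le_of_le_one_right (mul_nonneg (h0 _) (sub_nonneg.mpr (hyy _))) (on_le _ _)
  have step1 : ∫ ω, ξ ω * (rp α (W ω + y' ω) - rp α (W ω + y ω)) ∂μ ≤ ∫ ω, ∫ s, F ω s ∂ν ∂μ := by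
    refine integral_mono_of_nonneg (Filter.Eventually.of_forall fun ω => ?_) hFi.integral_prod_left
      (Filter.Eventually.of_forall fun ω => ?_)
    · exact mul_nonneg (h0 ω) (sub_nonneg.mpr (rp_mono α (by linarith [hyy ω])))
    · have := rp_sub_le (α := α) (u := W ω + y ω) (v := W ω + y' ω) hα.le (by linarith [hyy ω])
      refine (mul_le_mul_of_nonneg_left this (h0 ω)).trans (le_of_eq ?_)
      rw [intervalIntegral.integral_of_le zero_le_one, ← integral_const_mul]
      refine integral_congr_ae (Filter.Eventually.of_forall fun s => ?_)
      simp only [F]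
      rw [show W ω + y' ω - (W ω + y ω) = y' ω - y ω by ring,
        show W ω + y ω + s * (y' ω - y ω) = W ω + (y ω + s * (y' ω - y ω)) by ring]
      ring
  refine step1.trans ?_
  rw [integral_integral_swap hFi]
  have : ∀ s, ∫ ω, F ω s ∂μ ≤ q * ∫ ω, ξ ω * (y' ω - y ω) ∂μ := by
    intro s
    refine hQ i (fun ω => ξ ω * (y' ω - y ω)) (fun ω => y ω + s * (y' ω - y ω))
      (hξ.mul (hy'.sub hy)) (hy.add (measurable_const.mul (hy'.sub hy)))
      (fun ω => mul_nonneg (h0 _) (sub_nonneg.mpr (hyy _))) hIg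
  calc ∫ s, ∫ ω, F ω s ∂μ ∂ν ≤ ∫ s, (q * ∫ ω, ξ ω * (y' ω - y ω) ∂μ) ∂ν :=
        integral_mono hFi.swap.integral_prod_left (integrable_const _) this
    _ = _ := by simp [ν, Measure.real]

/-- variance of a locally dependent sum -/
lemma var_sum (S : Finset ι) (K : ι → Ω → ℝ) (hK : ∀ j, MemLp (K j) 2 μ) (r κ : ℝ)
    (hind : ∀ j l, r < dist j l → IndepFun (K j) (K l) μ) (hκ : ∀ i : ι, ((nb r i).card : ℝ) ≤ κ) :
    ∫ ω, (∑ j ∈ S, K j ω - ∫ ω', ∑ j ∈ S, K j ω' ∂μ)^2 ∂μ ≤ κ * ∑ j, ∫ ω, (K j ω)^2 ∂μ := by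
  have hsm : MemLp (fun ω => ∑ j ∈ S, K j ω) 2 μ := memLp_finsetSum S fun j _ => hK j
  rw [← variance_eq_integral hsm.aestronglyMeasurable.aemeasurable]
  have hv : Var[fun ω => ∑ j ∈ S, K j ω; μ] = ∑ j ∈ S, ∑ l ∈ S, cov[K j, K l; μ] :=
    variance_fun_sum' fun j _ => hK j
  rw [hv]
  set v : ι → ℝ := fun j => ∫ ω, (K j ω)^2 ∂μ with hvdef
  have v0 : ∀ j, 0 ≤ v j := fun j => integral_nonneg fun ω => sq_nonneg _
  have hc : ∀ j l, cov[K j, K l; μ] ≤ 1/2 * (v j + v l) := by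
    intro j l
    have h1 := variance_nonneg (fun ω => K j ω - K l ω) μ
    rw [variance_fun_sub (hK j) (hK l)] at h1
    have h2 := variance_le_expectation_sq (X := K j) (μ := μ) (hK j).aestronglyMeasurable
    have h3 := variance_le_expectation_sq (X := K l) (μ := μ) (hK l).aestronglyMeasurable
    simp only [Pi.pow_apply] at h2 h3
    simp only [hvdef]
    linarith
  classical
  have hc2 : ∀ j l, cov[K j, K l; μ] ≤ if dist j l ≤ r then 1/2 * (v j + v l) else 0 := by
    intro j l
    split_ifs with h
    · exact hc j l
    · exact le_of_eq ((hind j l (not_le.mp h)).covariance_eq_zero (hK j) (hK l))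
  have pos : ∀ j l, 0 ≤ if dist j l ≤ r then 1/2 * (v j + v l) else 0 := by
    intro j l; split_ifs
    · linarith [v0 j, v0 l]
    · exact le_rfl
  have cardle : ∀ j, ∑ l, (if dist j l ≤ r then v j else 0) ≤ κ * v j := by
    intro j
    rw [← Finset.sum_filter, Finset.sum_const, nsmul_eq_mul]
    refine mul_le_mul_of_nonneg_right (le_trans (le_of_eq ?_) (hκ j)) (v0 j)
    unfold nb; congr
  calc ∑ j ∈ S, ∑ l ∈ S, cov[K j, K l; μ]
      ≤ ∑ j ∈ S, ∑ l ∈ S, (if dist j l ≤ r then 1/2 * (v j + v l) else 0) :=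
        Finset.sum_le_sum fun j _ => Finset.sum_le_sum fun l _ => hc2 j l
    _ ≤ ∑ j, ∑ l, (if dist j l ≤ r then 1/2 * (v j + v l) else 0) := by
        refine (Finset.sum_le_sum fun j _ => Finset.sum_le_sum_of_subset_of_nonneg
          (Finset.subset_univ S) fun l _ _ => pos j l).trans ?_
        exact Finset.sum_le_sum_of_subset_of_nonneg (Finset.subset_univ S)
          fun j _ _ => Finset.sum_nonneg fun l _ => pos j l
    _ = 1/2 * ∑ j, ∑ l, (if dist j l ≤ r then v j else 0)
        + 1/2 * ∑ j, ∑ l, (if dist j l ≤ r then v l else 0) := by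
        simp only [Finset.mul_sum, ← Finset.sum_add_distrib]
        refine Finset.sum_congr rfl fun j _ => Finset.sum_congr rfl fun l _ => ?_
        split_ifs <;> ring
    _ = ∑ j, ∑ l, (if dist j l ≤ r then v j else 0) := by
        rw [Finset.sum_comm (f := fun j l => if dist j l ≤ r then v l else 0)]
        simp_rw [dist_comm]
        ring
    _ ≤ ∑ j, κ * v j := Finset.sum_le_sum fun j _ => cardle j
    _ = _ := by rw [Finset.mul_sum]

end
end BE

namespace BE
section
variable {Ω ι : Type*} [mΩ : MeasurableSpace Ω] [Fintype ι] [PseudoMetricSpace ι]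
  {μ : Measure Ω} [IsProbabilityMeasure μ] {X : ι → Ω → ℝ} {m κ b : ℝ}

lemma kf_joint {Y : Ω → ℝ} (hY : Measurable Y) : Measurable (fun p : Ω × ℝ => kf (Y p.1) p.2) :=
  kf_meas.comp ((hY.comp measurable_fst).prodMk measurable_snd)

lemma fub_int {u Y : Ω → ℝ} (hu : Integrable u μ) (hY : Measurable Y) :
    Integrable (fun p : Ω × ℝ => u p.1 * kf (Y p.1) p.2) (μ.prod nu) := by
  refine (hu.comp_fst nu).norm.mono' (((hu.comp_fst nu).aestronglyMeasurable).mul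
    (kf_joint hY).aestronglyMeasurable) (Filter.Eventually.of_forall fun p => ?_)
  simp only [Real.norm_eq_abs, abs_mul]
  exact mul_le_of_le_one_right (abs_nonneg _) (kf_abs_le _ _)

lemma fub_int_abs {u Y : Ω → ℝ} (hu : Integrable u μ) (hY : Measurable Y) :
    Integrable (fun p : Ω × ℝ => u p.1 * |kf (Y p.1) p.2|) (μ.prod nu) := by
  refine (hu.comp_fst nu).norm.mono' (((hu.comp_fst nu).aestronglyMeasurable).mul
    (continuous_abs.measurable.comp (kf_joint hY)).aestronglyMeasurable)
    (Filter.Eventually.of_forall fun p => ?_)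
  simp only [Real.norm_eq_abs, abs_mul, Function.comp, abs_abs]
  exact mul_le_of_le_one_right (abs_nonneg _) (kf_abs_le _ _)

lemma fub_abs {u Y : Ω → ℝ} (hu : Integrable u μ) (hY : Measurable Y) :
    ∫ t, ∫ ω, u ω * |kf (Y ω) t| ∂μ ∂nu = ∫ ω, u ω * min 1 |Y ω| ∂μ := by
  rw [← integral_integral_swap (f := fun ω t => u ω * |kf (Y ω) t|) (fub_int_abs hu hY)]
  refine integral_congr_ae (Filter.Eventually.of_forall fun ω => ?_)
  simp only [integral_const_mul, kf_int_abs]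

lemma fub_one {u Y : Ω → ℝ} (hu : Integrable u μ) (hY : Measurable Y) :
    ∫ t, ∫ ω, u ω * kf (Y ω) t ∂μ ∂nu = ∫ ω, u ω * clip (Y ω) ∂μ := by
  rw [← integral_integral_swap (f := fun ω t => u ω * kf (Y ω) t) (fub_int hu hY)]
  refine integral_congr_ae (Filter.Eventually.of_forall fun ω => ?_)
  simp only [integral_const_mul, kf_int_one]

/-- single kernel -/
noncomputable def Kj (X : ι → Ω → ℝ) (m : ℝ) (j : ι) (ω : Ω) (t : ℝ) : ℝ :=
  X j ω * kf (Ws X (nb m j) ω) t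

/-- far kernel sum -/
noncomputable def Mh (X : ι → Ω → ℝ) (m : ℝ) (i : ι) (ω : Ω) (t : ℝ) : ℝ :=
  ∑ j ∈ nbc (4*m) i, Kj X m j ω t

/-- its mean -/
noncomputable def Mm (μ : Measure Ω) (X : ι → Ω → ℝ) (m : ℝ) (i : ι) (t : ℝ) : ℝ :=
  ∫ ω, Mh X m i ω t ∂μ

lemma Kj_abs (j : ι) (ω : Ω) (t : ℝ) : |Kj X m j ω t| ≤ |X j ω| := by
  unfold Kj; rw [abs_mul]; exact mul_le_of_le_one_right (abs_nonneg _) (kf_abs_le _ _)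

lemma kf_meas_left (t : ℝ) : Measurable (fun y => kf y t) :=
  kf_meas.comp (measurable_id.prodMk measurable_const)

lemma Kj_sg (hm : 0 ≤ m) (j : ι) (t : ℝ) {T : Finset ι} (h : nb m j ⊆ T) :
    Measurable[sg X T] (fun ω => Kj X m j ω t) := by
  unfold Kj
  have hj : j ∈ nb m j := by rw [mem_nb]; simpa using hm
  exact (meas_X X (h hj)).mul ((kf_meas_left t).comp (meas_Ws X h))

lemma LD.Kj_l2 (hL : LD μ X m κ b) (j : ι) (t : ℝ) : MemLp (fun ω => Kj X m j ω t) 2 μ := by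
  refine MemLp.of_le (hL.l2 j)
    ((Kj_sg hL.m0 j t (Finset.Subset.refl _)).mono (hL.le _) le_rfl).aestronglyMeasurable
    (Filter.Eventually.of_forall fun ω => ?_)
  exact Kj_abs j ω t

lemma LD.nb_sub (hL : LD μ X m κ b) (j : ι) : nb m j ⊆ nb (4*m) j :=
  nb_mono (by linarith [hL.m0]) j

lemma LD.Y_le (hL : LD μ X m κ b) (j : ι) (ω : Ω) : |Ws X (nb m j) ω| ≤ Zs X (nb (4*m) j) ω :=
  (Ws_le_Zs _ _ _).trans (Zs_mono X (hL.nb_sub j) ω)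

lemma min_mem (z : ℝ) (hz : 0 ≤ z) : 0 ≤ min 1 z ∧ min 1 z ≤ 1 ∧ min 1 z ≤ z :=
  ⟨le_min zero_le_one hz, min_le_left _ _, min_le_right _ _⟩

/-- bounded multiples of integrable functions -/
lemma int_bdd {u v : Ω → ℝ} (hu : Integrable u μ) (hv : Measurable v) {C : ℝ} (h1 : ∀ ω, |v ω| ≤ C) :
    Integrable (fun ω => u ω * v ω) μ := by
  refine (hu.norm.mul_const C).mono' (hu.aestronglyMeasurable.mul hv.aestronglyMeasurable)
    (Filter.Eventually.of_forall fun ω => ?_)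
  simp only [Real.norm_eq_abs, abs_mul]
  exact mul_le_mul_of_nonneg_left (h1 ω) (abs_nonneg _)

lemma meas_min {v : Ω → ℝ} (hv : Measurable v) : Measurable (fun ω => min 1 (v ω)) :=
  measurable_const.min hv

lemma min_bdd (z : ℝ) (hz : 0 ≤ z) : |min 1 z| ≤ 1 := by
  rw [abs_of_nonneg (min_mem z hz).1]; exact (min_mem z hz).2.1

lemma LD.int1 (hL : LD μ X m κ b) (i : ι) :
    Integrable (fun ω => |X i ω| * Zs X (nb (4*m) i) ω * min 1 (Zs X (nb (4*m) i) ω)) μ :=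
  int_bdd (l2_mul (hL.l2 i).abs (hL.Zs_l2 _)) (meas_min (hL.Zs_meas _))
    (fun ω => min_bdd _ (Zs_nonneg _ _ _))

lemma LD.int3 (hL : LD μ X m κ b) (i : ι) :
    Integrable (fun ω => (X i ω)^2 * min 1 (Zs X (nb (4*m) i) ω)) μ :=
  int_bdd (hL.l2 i).integrable_sq (meas_min (hL.Zs_meas _))
    (fun ω => min_bdd _ (Zs_nonneg _ _ _))

lemma LD.intR (hL : LD μ X m κ b) (j : ι) :
    Integrable (fun ω => |X j ω| * (|Ws X (nb m j) ω| * min 1 |Ws X (nb m j) ω|)) μ := by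
  have h := int_bdd (l2_mul (hL.l2 j).abs (hL.Ws_l2 (nb m j)).abs)
    (meas_min ((continuous_abs.measurable).comp (hL.Ws_meas (nb m j))))
    (fun ω => min_bdd _ (abs_nonneg _))
  refine h.congr (Filter.Eventually.of_forall fun ω => ?_)
  simp only [Function.comp, Pi.abs_apply]; ring

/-- Step D -/
lemma LD.stepD (hL : LD μ X m κ b) (S : Finset ι) :
    ∑ j ∈ S, ∫ ω, |X j ω| * (|Ws X (nb m j) ω| * min 1 |Ws X (nb m j) ω|) ∂μ ≤ b := by
  refine le_trans ?_ hL.H1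
  refine (Finset.sum_le_sum_of_subset_of_nonneg (Finset.subset_univ S) fun j _ _ => ?_).trans
    (Finset.sum_le_sum fun j _ => ?_)
  · exact integral_nonneg fun ω => mul_nonneg (abs_nonneg _)
      (mul_nonneg (abs_nonneg _) (min_mem _ (abs_nonneg _)).1)
  · refine integral_mono (hL.intR j) (hL.int1 j) fun ω => ?_
    simp only
    rw [mul_assoc]
    have := hL.Y_le j ω
    have h2 := Zs_nonneg X (nb (4*m) j) ω
    have h3 := min_mem _ (abs_nonneg (Ws X (nb m j) ω))
    gcongr

/-- Step F -/
lemma LD.stepF (hL : LD μ X m κ b) (i : ι) : 0.65 ≤ ∫ t, Mm μ X m i t ∂nu := by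
  have hKi : ∀ j, Integrable (fun t => ∫ ω, Kj X m j ω t ∂μ) nu := fun j =>
    (fub_int (l2_int (hL.l2 j)) (hL.Ws_meas (nb m j))).integral_prod_right
  have e : ∀ t, Mm μ X m i t = ∑ j ∈ nbc (4*m) i, ∫ ω, Kj X m j ω t ∂μ := by
    intro t
    unfold Mm Mh
    exact integral_finsetSum _ fun j _ => l2_int (hL.Kj_l2 j t)
  simp_rw [e]
  rw [integral_finsetSum _ fun j _ => hKi j]
  have e2 : ∀ j, ∫ t, ∫ ω, Kj X m j ω t ∂μ ∂nu = ∫ ω, X j ω * clip (Ws X (nb m j) ω) ∂μ := fun j =>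
    fub_one (l2_int (hL.l2 j)) (hL.Ws_meas (nb m j))
  simp_rw [e2]
  have clm : Measurable clip := by
    have : Continuous clip := by unfold clip; fun_prop
    exact this.measurable
  have hcl : ∀ j, ∫ ω, X j ω * Ws X Finset.univ ω ∂μ
      - ∫ ω, |X j ω| * (|Ws X (nb m j) ω| * min 1 |Ws X (nb m j) ω|) ∂μ ≤
      ∫ ω, X j ω * clip (Ws X (nb m j) ω) ∂μ := by
    intro j
    rw [hL.EXW, ← integral_sub (l2_mul (hL.l2 j) (hL.Ws_l2 _)) (hL.intR j)]
    refine integral_mono ((l2_mul (hL.l2 j) (hL.Ws_l2 _)).sub (hL.intR j))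
      (int_bdd (l2_int (hL.l2 j)) (clm.comp (hL.Ws_meas (nb m j))) (C := 1) fun ω => ?_) fun ω => ?_
    · simp only [Function.comp, clip_abs]; exact min_le_left _ _
    · simp only [Function.comp]
      have h1 := mul_le_mul_of_nonneg_left (clip_sub (Ws X (nb m j) ω)) (abs_nonneg (X j ω))
      rw [← abs_mul] at h1
      have h2 := le_abs_self (X j ω * (Ws X (nb m j) ω - clip (Ws X (nb m j) ω)))
      linarith
  have hs := Finset.sum_le_sum fun j (_ : j ∈ nbc (4*m) i) => hcl j
  rw [Finset.sum_sub_distrib] at hs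
  have hD := hL.stepD (nbc (4*m) i)
  have hN : ∑ j ∈ nbc (4*m) i, ∫ ω, X j ω * Ws X Finset.univ ω ∂μ = 1 -
      ∫ ω, Ws X (nb (4*m) i) ω * Ws X Finset.univ ω ∂μ := by
    rw [← integral_finsetSum _ fun j _ => l2_mul (hL.l2 j) (hL.Ws_l2 _), ← hL.var,
      ← integral_sub (hL.Ws_l2 _).integrable_sq (l2_mul (hL.Ws_l2 _) (hL.Ws_l2 _))]
    refine integral_congr_ae (Filter.Eventually.of_forall fun ω => ?_)
    simp only
    rw [← Finset.sum_mul]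
    have := Ws_split X (4*m) i ω
    have e3 : ∑ j ∈ nbc (4*m) i, X j ω = Ws X (nbc (4*m) i) ω := rfl
    rw [e3, pow_two, ← sub_mul]
    congr 1; linarith
  have h3 := hL.EWW i
  have h4 : ∫ ω, Ws X (nb (4*m) i) ω * Ws X Finset.univ ω ∂μ ≤
      ∫ ω, |Ws X (nb (4*m) i) ω * Ws X Finset.univ ω| ∂μ :=
    (le_abs_self _).trans abs_integral_le_integral_abs
  have := hL.b1
  norm_num at *
  linarith

lemma LD.Mm_int (hL : LD μ X m κ b) (i : ι) : Integrable (Mm μ X m i) nu := by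
  have hKi : ∀ j, Integrable (fun t => ∫ ω, Kj X m j ω t ∂μ) nu := fun j =>
    (fub_int (l2_int (hL.l2 j)) (hL.Ws_meas (nb m j))).integral_prod_right
  have e : Mm μ X m i = fun t => ∑ j ∈ nbc (4*m) i, ∫ ω, Kj X m j ω t ∂μ := by
    funext t
    unfold Mm Mh
    exact integral_finsetSum _ fun j _ => l2_int (hL.Kj_l2 j t)
  rw [e]
  exact integrable_finsetSum _ fun j _ => hKi j

/-- Step G -/
lemma LD.stepG (hL : LD μ X m κ b) (i : ι) : ∫ t, |t| * |Mm μ X m i t| ∂nu ≤ b := by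
  have hu : ∀ j, Integrable (fun ω => |X j ω| * min 1 |Ws X (nb m j) ω|) μ := fun j =>
    int_bdd (l2_int (hL.l2 j)).abs (meas_min ((continuous_abs.measurable).comp (hL.Ws_meas (nb m j))))
      (fun ω => min_bdd _ (abs_nonneg _))
  have hf := fun j => fub_int_abs (hu j) (hL.Ws_meas (nb m j))
  have hf2 := fun j => fub_abs (hu j) (hL.Ws_meas (nb m j))
  have hpt : ∀ t, |t| ≤ 1 → |t| * |Mm μ X m i t| ≤ ∑ j ∈ nbc (4*m) i,
      ∫ ω, (|X j ω| * min 1 |Ws X (nb m j) ω|) * |kf (Ws X (nb m j) ω) t| ∂μ := by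
    intro t ht
    have hIg : ∀ j, Integrable (fun ω => (|X j ω| * min 1 |Ws X (nb m j) ω|) *
        |kf (Ws X (nb m j) ω) t|) μ := fun j =>
      int_bdd (hu j) ((continuous_abs.measurable).comp ((kf_meas_left t).comp (hL.Ws_meas (nb m j))))
        (C := 1) (fun ω => by simp only [Function.comp, abs_abs]; exact kf_abs_le _ _)
    rw [← integral_finsetSum _ fun j _ => hIg j]
    have h1 : |Mm μ X m i t| ≤ ∫ ω, |Mh X m i ω t| ∂μ := abs_integral_le_integral_abs
    have hMi : Integrable (fun ω => |Mh X m i ω t|) μ := by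
      unfold Mh
      exact (integrable_finsetSum _ fun j _ => l2_int (hL.Kj_l2 j t)).abs
    refine (mul_le_mul_of_nonneg_left h1 (abs_nonneg t)).trans ?_
    rw [← integral_const_mul]
    refine integral_mono (hMi.const_mul _) (integrable_finsetSum _ fun j _ => hIg j) fun ω => ?_
    simp only
    unfold Mh
    refine (mul_le_mul_of_nonneg_left (Finset.abs_sum_le_sum_abs _ _) (abs_nonneg t)).trans ?_
    rw [Finset.mul_sum]
    refine Finset.sum_le_sum fun j _ => ?_
    unfold Kj
    rw [abs_mul]
    have := mul_le_mul_of_nonneg_left (kf_supp (Ws X (nb m j) ω) t ht) (abs_nonneg (X j ω))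
    linarith
  calc ∫ t, |t| * |Mm μ X m i t| ∂nu ≤ ∫ t, ∑ j ∈ nbc (4*m) i,
      ∫ ω, (|X j ω| * min 1 |Ws X (nb m j) ω|) * |kf (Ws X (nb m j) ω) t| ∂μ ∂nu := by
        refine integral_mono_of_nonneg (Filter.Eventually.of_forall fun t =>
          mul_nonneg (abs_nonneg _) (abs_nonneg _))
          (integrable_finsetSum _ fun j _ => (hf j).integral_prod_right) ?_
        exact nu_ae fun t h1 h2 => hpt t (by rw [abs_le]; constructor <;> linarith)
    _ = ∑ j ∈ nbc (4*m) i, ∫ ω, (|X j ω| * min 1 |Ws X (nb m j) ω|) * min 1 |Ws X (nb m j) ω| ∂μ := by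
        rw [integral_finsetSum _ fun j _ => (hf j).integral_prod_right]
        exact Finset.sum_congr rfl fun j _ => hf2 j
    _ ≤ ∑ j ∈ nbc (4*m) i, ∫ ω, |X j ω| * (|Ws X (nb m j) ω| * min 1 |Ws X (nb m j) ω|) ∂μ := by
        refine Finset.sum_le_sum fun j _ => integral_mono
          (int_bdd (hu j) (meas_min ((continuous_abs.measurable).comp (hL.Ws_meas (nb m j))))
            (fun ω => min_bdd _ (abs_nonneg _))) (hL.intR j) fun ω => ?_
        have h3 := min_mem _ (abs_nonneg (Ws X (nb m j) ω))
        simp only [Function.comp]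
        rw [mul_assoc]
        gcongr
        exact h3.2.2
    _ ≤ b := hL.stepD _

/-- independence of the near and the far field -/
lemma LD.far (hL : LD μ X m κ b) (i : ι) {S T : Finset ι} (hS : S ⊆ nb (2*m) i) (hT : T ⊆ nbc (3*m) i) :
    Indep (sg X S) (sg X T) μ := by
  refine hL.ind _ _ fun k hk l hl => ?_
  have h1 := mem_nb.mp (hS hk)
  have h2 := mem_nbc.mp (hT hl)
  have := dist_triangle i k l
  linarith

lemma LD.nb_far (hL : LD μ X m κ b) {i j : ι} (hj : j ∈ nbc (4*m) i) : nb m j ⊆ nbc (3*m) i := by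
  intro l hl
  rw [mem_nb] at hl; rw [mem_nbc] at *
  have := dist_triangle i l j
  rw [dist_comm l j] at this
  linarith

lemma LD.nbc_far (hL : LD μ X m κ b) (i : ι) : nbc (4*m) i ⊆ nbc (3*m) i := by
  intro l hl
  rw [mem_nbc] at *
  linarith [hL.m0]

lemma LD.Mh_meas (hL : LD μ X m κ b) (i : ι) :
    Measurable (fun p : Ω × ℝ => Mh X m i p.1 p.2) := by
  unfold Mh Kj
  exact Finset.measurable_fun_sum _ fun j _ =>
    ((hL.meas j).comp measurable_fst).mul (kf_joint (hL.Ws_meas _))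

lemma Mh_abs (i : ι) (ω : Ω) (t : ℝ) : |Mh X m i ω t| ≤ Zs X (nbc (4*m) i) ω := by
  unfold Mh Zs
  exact (Finset.abs_sum_le_sum_abs _ _).trans (Finset.sum_le_sum fun j _ => Kj_abs j ω t)

lemma LD.Mm_abs (hL : LD μ X m κ b) (i : ι) (t : ℝ) :
    |Mm μ X m i t| ≤ ∫ ω, Zs X (nbc (4*m) i) ω ∂μ := by
  refine (abs_integral_le_integral_abs).trans ?_
  refine integral_mono_of_nonneg (Filter.Eventually.of_forall fun ω => abs_nonneg _)
    (l2_int (hL.Zs_l2 _)) (Filter.Eventually.of_forall fun ω => Mh_abs i ω t)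

lemma LD.Mm_meas (hL : LD μ X m κ b) (i : ι) : Measurable (Mm μ X m i) := by
  have := (hL.Mh_meas i).stronglyMeasurable.integral_prod_left' (μ := μ)
  exact this.measurable

/-- Step C integrability -/
lemma LD.stepC_int (hL : LD μ X m κ b) (i : ι) {ξ : Ω → ℝ}
    (hξ : Measurable[sg X (nb (2*m) i)] ξ) (hi : Integrable ξ μ) :
    Integrable (fun p : Ω × ℝ => ξ p.1 * (Mh X m i p.1 p.2 - Mm μ X m i p.2)^2) (μ.prod nu) := by
  set c := ∫ ω, Zs X (nbc (4*m) i) ω ∂μ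
  have hG : Integrable (fun ω => (Zs X (nbc (4*m) i) ω + c)^2) μ :=
    ((hL.Zs_l2 _).add (memLp_const c)).integrable_sq
  have hGm : Measurable[sg X (nbc (4*m) i)] (fun ω => (Zs X (nbc (4*m) i) ω + c)^2) :=
    ((meas_Zs X (Finset.Subset.refl _)).add measurable_const).pow_const 2
  have h1 := indep_integrable (hL.far i (Finset.Subset.refl _) (hL.nbc_far i)) hξ hGm hi hG
  refine (h1.norm.comp_fst nu).mono' ?_ (Filter.Eventually.of_forall fun p => ?_)
  · exact (((hξ.mono (hL.le _) le_rfl).comp measurable_fst).mul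
      (((hL.Mh_meas i).sub ((hL.Mm_meas i).comp measurable_snd)).pow_const 2)).aestronglyMeasurable
  · simp only [Real.norm_eq_abs, abs_mul]
    refine mul_le_mul_of_nonneg_left ?_ (abs_nonneg _)
    rw [abs_of_nonneg (sq_nonneg _), abs_of_nonneg (sq_nonneg _), sq_le_sq]
    refine (abs_sub _ _).trans ((add_le_add (Mh_abs i _ _) (hL.Mm_abs i _)).trans (le_abs_self _))

/-- Step C -/
lemma LD.stepC (hL : LD μ X m κ b) (i : ι) {ξ : Ω → ℝ}
    (hξ : Measurable[sg X (nb (2*m) i)] ξ) (h0 : ∀ ω, 0 ≤ ξ ω) (hi : Integrable ξ μ) :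
    ∫ ω, ∫ t, ξ ω * (Mh X m i ω t - Mm μ X m i t)^2 ∂nu ∂μ ≤ b * ∫ ω, ξ ω ∂μ := by
  have hC := hL.stepC_int i hξ hi
  rw [integral_integral_swap (f := fun ω t => ξ ω * (Mh X m i ω t - Mm μ X m i t)^2) hC]
  have hu := fun j => (hL.l2 j).integrable_sq
  have hf := fun j => fub_int_abs (hu j) (hL.Ws_meas (nb m j))
  have hf2 := fun j => fub_abs (hu j) (hL.Ws_meas (nb m j))
  have E0 : 0 ≤ ∫ ω, ξ ω ∂μ := integral_nonneg h0
  have hpt : ∀ t, ∫ ω, ξ ω * (Mh X m i ω t - Mm μ X m i t)^2 ∂μ ≤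
      (∫ ω, ξ ω ∂μ) * (κ * ∑ j, ∫ ω, (X j ω)^2 * |kf (Ws X (nb m j) ω) t| ∂μ) := by
    intro t
    have hm : Measurable[sg X (nbc (3*m) i)] (fun ω => (Mh X m i ω t - Mm μ X m i t)^2) := by
      unfold Mh
      exact ((Finset.measurable_fun_sum _ fun j hj => Kj_sg hL.m0 j t (hL.nb_far hj)).sub
        measurable_const).pow_const 2
    rw [indep_mul (hL.far i (Finset.Subset.refl _) (Finset.Subset.refl _)) (hL.le _) (hL.le _) hξ hm]
    refine mul_le_mul_of_nonneg_left ?_ E0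
    have hv := var_sum (μ := μ) (nbc (4*m) i) (fun j ω => Kj X m j ω t) (fun j => hL.Kj_l2 j t) (4*m) κ
      (fun j l hjl => indepFun_of (hL.ind (nb m j) (nb m l) (fun k hk k' hk' => by
        rw [mem_nb] at hk hk'
        have h1 := dist_triangle j k l
        have h2 := dist_triangle k k' l
        rw [dist_comm k' l] at h2
        linarith [hL.m0]))
        (Kj_sg hL.m0 j t (Finset.Subset.refl _)) (Kj_sg hL.m0 l t (Finset.Subset.refl _))) hL.card
    refine hv.trans (le_of_eq ?_)
    congr 1
    refine Finset.sum_congr rfl fun j _ => ?_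
    refine integral_congr_ae (Filter.Eventually.of_forall fun ω => ?_)
    simp only [Kj]
    rw [mul_pow, kf_sq]
  calc _ ≤ ∫ t, (∫ ω, ξ ω ∂μ) * (κ * ∑ j, ∫ ω, (X j ω)^2 * |kf (Ws X (nb m j) ω) t| ∂μ) ∂nu := by
        refine integral_mono hC.integral_prod_right ?_ hpt
        exact ((integrable_finsetSum _ fun j _ => (hf j).integral_prod_right).const_mul _).const_mul _
    _ = (∫ ω, ξ ω ∂μ) * (κ * ∑ j, ∫ ω, (X j ω)^2 * min 1 |Ws X (nb m j) ω| ∂μ) := by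
        rw [integral_const_mul, integral_const_mul, integral_finsetSum _ fun j _ => (hf j).integral_prod_right]
        congr 2
        exact Finset.sum_congr rfl fun j _ => hf2 j
    _ ≤ (∫ ω, ξ ω ∂μ) * b := by
        refine mul_le_mul_of_nonneg_left (le_trans ?_ hL.H3) E0
        have κ0 : 0 ≤ κ := le_trans (Nat.cast_nonneg _) (hL.card i)
        refine mul_le_mul_of_nonneg_left (Finset.sum_le_sum fun j _ => ?_) κ0
        refine integral_mono (int_bdd (hu j) (meas_min ((continuous_abs.measurable).comp
          (hL.Ws_meas (nb m j)))) (fun ω => min_bdd _ (abs_nonneg _))) (hL.int3 j) fun ω => ?_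
        exact mul_le_mul_of_nonneg_left (min_le_min_left _ (hL.Y_le j ω)) (sq_nonneg _)
    _ = _ := mul_comm _ _

end
end BE

namespace BE
section
variable {Ω ι : Type*} [mΩ : MeasurableSpace Ω] [Fintype ι] [PseudoMetricSpace ι]
  {μ : Measure Ω} [IsProbabilityMeasure μ] {X : ι → Ω → ℝ} {m κ b : ℝ}

lemma LD.rp_shift (hL : LD μ X m κ b) {α q : ℝ} (hα : 0 < α) (hQ : PropQ μ X m α q) (i : ι)
    {ξ a : Ω → ℝ} (hξ : Measurable[sg X (nb (2*m) i)] ξ) (ha : Measurable[sg X (nb (2*m) i)] a)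
    (h0 : ∀ ω, 0 ≤ ξ ω) (hi : Integrable ξ μ) (c t : ℝ) :
    |∫ ω, ξ ω * (rp α (Ws X Finset.univ ω + (a ω + (c + t))) -
        rp α (Ws X Finset.univ ω + (a ω + c))) ∂μ| ≤ q * |t| * ∫ ω, ξ ω ∂μ := by
  rcases le_total 0 t with ht | ht
  · rw [abs_of_nonneg ht, abs_of_nonneg (integral_nonneg fun ω => mul_nonneg (h0 ω)
      (sub_nonneg.mpr (rp_mono α (by linarith))))]
    have e : ∀ ω, a ω + (c + t) - (a ω + c) = t := fun ω => by ring
    have := PropQ.lip hL hα hQ i hξ (y := fun ω => a ω + c) (y' := fun ω => a ω + (c + t))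
      (ha.add measurable_const) (ha.add measurable_const) h0 (fun ω => by linarith)
      (by simp only [e]; exact hi.mul_const t)
    simp only [e, integral_mul_const] at this
    refine this.trans (le_of_eq (by ring))
  · rw [abs_of_nonpos ht, abs_of_nonpos (integral_nonpos fun ω => mul_nonpos_of_nonneg_of_nonpos (h0 ω)
      (sub_nonpos.mpr (rp_mono α (by linarith)))), ← integral_neg]
    have e : ∀ ω, a ω + c - (a ω + (c + t)) = -t := fun ω => by ring
    have := PropQ.lip hL hα hQ i hξ (y := fun ω => a ω + (c + t)) (y' := fun ω => a ω + c)
      (ha.add measurable_const) (ha.add measurable_const) h0 (fun ω => by linarith)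
      (by simp only [e]; exact hi.mul_const (-t))
    simp only [e, integral_mul_const] at this
    refine le_trans (le_of_eq ?_) (this.trans (le_of_eq (by ring)))
    refine integral_congr_ae (Filter.Eventually.of_forall fun ω => ?_)
    simp only; ring

/-- Lipschitz property of the smoothed concentration function -/
lemma LD.H_lip (hL : LD μ X m κ b) {α q : ℝ} (hα : 0 < α) (hQ : PropQ μ X m α q) (i : ι)
    {ξ a : Ω → ℝ} (hξ : Measurable[sg X (nb (2*m) i)] ξ) (ha : Measurable[sg X (nb (2*m) i)] a)
    (h0 : ∀ ω, 0 ≤ ξ ω) (hi : Integrable ξ μ) (t : ℝ) :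
    |∫ ω, ξ ω * tz α (Ws X Finset.univ ω + a ω + t) ∂μ - ∫ ω, ξ ω * tz α (Ws X Finset.univ ω + a ω) ∂μ|
      ≤ 2 * q / α * |t| * ∫ ω, ξ ω ∂μ := by
  have ham := ha.mono (hL.le _) le_rfl
  have hWm := hL.Ws_meas Finset.univ
  have hIg : ∀ (g : Ω → ℝ), Measurable g → Integrable (fun ω => ξ ω * tz α (g ω)) μ := fun g hg =>
    int_bdd hi ((tz_cont α).measurable.comp hg) (C := 1) (fun ω => by
      rw [abs_of_nonneg (tz_nonneg hα _)]; exact tz_le hα _)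
  have hIg2 : ∀ (g : Ω → ℝ), Measurable g → Integrable (fun ω => ξ ω * rp α (g ω)) μ := fun g hg =>
    int_bdd hi ((rp_cont α).measurable.comp hg) (C := α) (fun ω => by
      rw [abs_of_nonneg (rp_nonneg α _)]; exact rp_le hα.le _)
  rw [← integral_sub (hIg (fun ω => Ws X Finset.univ ω + a ω + t) ((hWm.add ham).add measurable_const))
    (hIg (fun ω => Ws X Finset.univ ω + a ω) (hWm.add ham))]
  have e : ∀ ω, ξ ω * tz α (Ws X Finset.univ ω + a ω + t) - ξ ω * tz α (Ws X Finset.univ ω + a ω) =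
      (1/α) * (ξ ω * (rp α (Ws X Finset.univ ω + (a ω + (α + t))) - rp α (Ws X Finset.univ ω + (a ω + α)))) -
      (1/α) * (ξ ω * (rp α (Ws X Finset.univ ω + (a ω + (-α + t))) -
        rp α (Ws X Finset.univ ω + (a ω + -α)))) := by
    intro ω
    unfold tz
    rw [show Ws X Finset.univ ω + (a ω + (α + t)) = Ws X Finset.univ ω + a ω + t + α by ring,
      show Ws X Finset.univ ω + (a ω + (-α + t)) = Ws X Finset.univ ω + a ω + t - α by ring,
      show Ws X Finset.univ ω + (a ω + α) = Ws X Finset.univ ω + a ω + α by ring,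
      show Ws X Finset.univ ω + (a ω + -α) = Ws X Finset.univ ω + a ω - α by ring]
    ring
  have hI : ∀ c c' : ℝ, Integrable (fun ω => ξ ω * (rp α (Ws X Finset.univ ω + (a ω + c))
      - rp α (Ws X Finset.univ ω + (a ω + c')))) μ := by
    intro c c'
    simp only [mul_sub]
    exact (hIg2 _ (hWm.add (ham.add measurable_const))).sub (hIg2 _ (hWm.add (ham.add measurable_const)))
  simp_rw [e]
  rw [integral_sub ((hI _ _).const_mul _) ((hI _ _).const_mul _), integral_const_mul, integral_const_mul,
    ← mul_sub, abs_mul, abs_of_pos (by positivity : 0 < 1/α)]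
  have h1 := hL.rp_shift hα hQ i hξ ha h0 hi α t
  have h2 := hL.rp_shift hα hQ i hξ ha h0 hi (-α) t
  refine (mul_le_mul_of_nonneg_left ((abs_sub _ _).trans (add_le_add h1 h2)) (by positivity)).trans
    (le_of_eq (by ring))

/-- Step E -/
lemma LD.stepE (hL : LD μ X m κ b) {α q : ℝ} (hα : 0 < α) (q0 : 0 ≤ q) (hQ : PropQ μ X m α q) (i : ι)
    {ξ a : Ω → ℝ} (hξ : Measurable[sg X (nb (2*m) i)] ξ) (ha : Measurable[sg X (nb (2*m) i)] a)
    (h0 : ∀ ω, 0 ≤ ξ ω) (hi : Integrable ξ μ) :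
    Integrable (fun ω => ∫ t, ξ ω * tz α (Ws X Finset.univ ω + a ω + t) * Mm μ X m i t ∂nu) μ ∧
    0.65 * ∫ ω, ξ ω * tz α (Ws X Finset.univ ω + a ω) ∂μ - 2 * q / α * b * ∫ ω, ξ ω ∂μ ≤
      ∫ ω, ∫ t, ξ ω * tz α (Ws X Finset.univ ω + a ω + t) * Mm μ X m i t ∂nu ∂μ := by
  have ham := ha.mono (hL.le _) le_rfl
  have hξm := hξ.mono (hL.le _) le_rfl
  have hWm := hL.Ws_meas Finset.univ
  have hV : Measurable (fun p : Ω × ℝ => Ws X Finset.univ p.1 + a p.1 + p.2) := by fun_prop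
  have hF : Integrable (fun p : Ω × ℝ => ξ p.1 * tz α (Ws X Finset.univ p.1 + a p.1 + p.2)
      * Mm μ X m i p.2) (μ.prod nu) := by
    refine (hi.mul_prod (hL.Mm_int i)).norm.mono' ?_ (Filter.Eventually.of_forall fun p => ?_)
    · exact (((hξm.comp measurable_fst).mul ((tz_cont α).measurable.comp hV)).mul
        ((hL.Mm_meas i).comp measurable_snd)).aestronglyMeasurable
    · simp only [Real.norm_eq_abs, abs_mul]
      refine mul_le_mul_of_nonneg_right ?_ (abs_nonneg _)
      refine mul_le_of_le_one_right (abs_nonneg _) ?_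
      rw [abs_of_nonneg (tz_nonneg hα _)]; exact tz_le hα _
  refine ⟨hF.integral_prod_left, ?_⟩
  rw [integral_integral_swap (f := fun ω t => ξ ω * tz α (Ws X Finset.univ ω + a ω + t)
      * Mm μ X m i t) hF]
  simp_rw [integral_mul_const]
  set H0 := ∫ ω, ξ ω * tz α (Ws X Finset.univ ω + a ω) ∂μ with hH0
  have H0p : 0 ≤ H0 := integral_nonneg fun ω => mul_nonneg (h0 ω) (tz_nonneg hα _)
  have E0 : 0 ≤ ∫ ω, ξ ω ∂μ := integral_nonneg h0
  have hG := hL.stepG i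
  have hFF := hL.stepF i
  have hMi := hL.Mm_int i
  have hti : Integrable (fun t => |t| * |Mm μ X m i t|) nu := by
    refine hMi.norm.mono' ?_ (nu_ae fun t h1 h2 => ?_)
    · exact ((continuous_abs.measurable).mul
        ((continuous_abs.measurable).comp (hL.Mm_meas i))).aestronglyMeasurable
    · simp only [Real.norm_eq_abs, abs_mul, abs_abs]
      exact mul_le_of_le_one_left (abs_nonneg _) (by rw [abs_le]; constructor <;> linarith)
  calc 0.65 * H0 - 2 * q / α * b * ∫ ω, ξ ω ∂μ
      ≤ H0 * (∫ t, Mm μ X m i t ∂nu) - (2 * q / α * ∫ ω, ξ ω ∂μ) * ∫ t, |t| * |Mm μ X m i t| ∂nu := by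
        have := mul_le_mul_of_nonneg_left hFF H0p
        have := mul_le_mul_of_nonneg_left hG (by positivity : 0 ≤ 2 * q / α * ∫ ω, ξ ω ∂μ)
        linarith
    _ = ∫ t, (H0 * Mm μ X m i t - (2 * q / α * ∫ ω, ξ ω ∂μ) * (|t| * |Mm μ X m i t|)) ∂nu := by
        rw [integral_sub (hMi.const_mul _) (hti.const_mul _), integral_const_mul, integral_const_mul]
    _ ≤ _ := by
        refine integral_mono ((hMi.const_mul _).sub (hti.const_mul _)) ?_ fun t => ?_
        · have := hF.integral_prod_right
          simp only [integral_mul_const] at this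
          exact this
        · have h1 := hL.H_lip hα hQ i hξ ha h0 hi t
          rw [← hH0] at h1
          simp only
          set Ht := ∫ ω, ξ ω * tz α (Ws X Finset.univ ω + a ω + t) ∂μ
          have h2 : -(|Ht - H0| * |Mm μ X m i t|) ≤ (Ht - H0) * Mm μ X m i t := by
            rw [← abs_mul]; exact neg_abs_le _
          have h3 := mul_le_mul_of_nonneg_right h1 (abs_nonneg (Mm μ X m i t))
          linarith

/-- Step A -/
lemma LD.stepA (hL : LD μ X m κ b) {α : ℝ} (hα : 0 < α) (i : ι)
    {ξ a : Ω → ℝ} (hξ : Measurable[sg X (nb (2*m) i)] ξ) (ha : Measurable[sg X (nb (2*m) i)] a)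
    (h0 : ∀ ω, 0 ≤ ξ ω) (hi : Integrable ξ μ) :
    (∀ j ∈ nbc (4*m) i, Integrable (fun ω => ξ ω * (X j ω * (tf α (Ws X Finset.univ ω + a ω) -
      tf α (Ws X Finset.univ ω + a ω - Ws X (nb m j) ω)))) μ) ∧
    ∑ j ∈ nbc (4*m) i, ∫ ω, ξ ω * (X j ω * (tf α (Ws X Finset.univ ω + a ω) -
      tf α (Ws X Finset.univ ω + a ω - Ws X (nb m j) ω))) ∂μ ≤ 2 * α * ∫ ω, ξ ω ∂μ := by
  have ham := ha.mono (hL.le _) le_rfl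
  have hξm := hξ.mono (hL.le _) le_rfl
  have hWm := hL.Ws_meas Finset.univ
  have hfar := hL.far i (Finset.Subset.refl _) (hL.nbc_far i)
  have hXi : ∀ j ∈ nbc (4*m) i, Integrable (fun ω => ξ ω * X j ω) μ := fun j hj =>
    indep_integrable hfar hξ (meas_X X hj) hi (l2_int (hL.l2 j))
  have hgi : ∀ j ∈ nbc (4*m) i, ∀ g : Ω → ℝ, Measurable g →
      Integrable (fun ω => ξ ω * X j ω * tf α (g ω)) μ := fun j hj g hg =>
    int_bdd (hXi j hj) ((tf_cont hα).measurable.comp hg) (fun ω => tf_bound hα _)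
  have e1 : ∀ j ω, ξ ω * (X j ω * (tf α (Ws X Finset.univ ω + a ω) -
      tf α (Ws X Finset.univ ω + a ω - Ws X (nb m j) ω))) =
      ξ ω * X j ω * tf α (Ws X Finset.univ ω + a ω) -
      ξ ω * X j ω * tf α (Ws X Finset.univ ω + a ω - Ws X (nb m j) ω) := fun j ω => by ring
  simp_rw [e1]
  have m1 : Measurable (fun ω => Ws X Finset.univ ω + a ω) := hWm.add ham
  have m2 : ∀ j, Measurable (fun ω => Ws X Finset.univ ω + a ω - Ws X (nb m j) ω) := fun j =>
    m1.sub (hL.Ws_meas _)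
  refine ⟨fun j hj => (hgi j hj _ m1).sub (hgi j hj _ (m2 j)), ?_⟩
  have z : ∀ j ∈ nbc (4*m) i,
      ∫ ω, ξ ω * X j ω * tf α (Ws X Finset.univ ω + a ω - Ws X (nb m j) ω) ∂μ = 0 := by
    intro j hj
    have hsub : nb (2*m) i ⊆ nbc m j := by
      intro k hk
      rw [mem_nb] at hk; rw [mem_nbc] at *
      have := dist_triangle i k j
      rw [dist_comm k j] at this
      linarith [hL.m0]
    have hz := hL.zero j (g := fun ω => ξ ω * tf α (Ws X (nbc m j) ω + a ω))
      ((hξ.mono (sg_mono X hsub) le_rfl).mul ((tf_cont hα).measurable.comp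
        ((meas_Ws X (Finset.Subset.refl _)).add (ha.mono (sg_mono X hsub) le_rfl))))
    rw [← hz]
    refine integral_congr_ae (Filter.Eventually.of_forall fun ω => ?_)
    simp only
    rw [show Ws X Finset.univ ω + a ω - Ws X (nb m j) ω = Ws X (nbc m j) ω + a ω by
      rw [Ws_split X m j ω]; ring]
    ring
  have e2 : ∀ j ∈ nbc (4*m) i, ∫ ω, (ξ ω * X j ω * tf α (Ws X Finset.univ ω + a ω) -
      ξ ω * X j ω * tf α (Ws X Finset.univ ω + a ω - Ws X (nb m j) ω)) ∂μ =
      ∫ ω, ξ ω * X j ω * tf α (Ws X Finset.univ ω + a ω) ∂μ := by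
    intro j hj
    rw [integral_sub (hgi j hj _ m1) (hgi j hj _ (m2 j)), z j hj, sub_zero]
  rw [Finset.sum_congr rfl e2, ← integral_finsetSum _ fun j hj => hgi j hj _ m1]
  have E0 : 0 ≤ ∫ ω, ξ ω ∂μ := integral_nonneg h0
  have hNm : Measurable[sg X (nbc (4*m) i)] (fun ω => |Ws X (nbc (4*m) i) ω|) :=
    (continuous_abs.measurable).comp (meas_Ws X (Finset.Subset.refl _))
  have hNi : Integrable (fun ω => |Ws X (nbc (4*m) i) ω|) μ := (l2_int (hL.Ws_l2 _)).abs
  calc _ ≤ ∫ ω, 3/2 * α * (ξ ω * |Ws X (nbc (4*m) i) ω|) ∂μ := by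
        refine integral_mono (integrable_finsetSum _ fun j hj => hgi j hj _ m1)
          ((indep_integrable hfar hξ hNm hi hNi).const_mul _) fun ω => ?_
        simp only
        have : ∑ j ∈ nbc (4*m) i, ξ ω * X j ω * tf α (Ws X Finset.univ ω + a ω) =
            ξ ω * (Ws X (nbc (4*m) i) ω * tf α (Ws X Finset.univ ω + a ω)) := by
          unfold Ws
          rw [Finset.sum_mul, Finset.mul_sum]
          exact Finset.sum_congr rfl fun j _ => by ring
        rw [this]
        have h1 := le_abs_self (Ws X (nbc (4*m) i) ω * tf α (Ws X Finset.univ ω + a ω))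
        rw [abs_mul] at h1
        have h2 := mul_le_mul_of_nonneg_left (tf_bound hα (Ws X Finset.univ ω + a ω))
          (abs_nonneg (Ws X (nbc (4*m) i) ω))
        have := mul_le_mul_of_nonneg_left (h1.trans h2) (h0 ω)
        linarith
    _ = 3/2 * α * ((∫ ω, ξ ω ∂μ) * ∫ ω, |Ws X (nbc (4*m) i) ω| ∂μ) := by
        rw [integral_const_mul, indep_mul hfar (hL.le _) (hL.le _) hξ hNm]
    _ ≤ 3/2 * α * ((∫ ω, ξ ω ∂μ) * (4/3)) := by
        have := hL.EN i
        gcongr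
    _ = _ := by ring

/-- One step of the concentration bootstrap. -/
lemma LD.conc_step (hL : LD μ X m κ b) {α q : ℝ} (hα : 0 < α) (q0 : 0 ≤ q) (hQ : PropQ μ X m α q) :
    PropQ μ X m α ((11/4 * α + 2 * b + 2 * q / α * b) / 0.65) := by
  intro i ξ a hξ ha h0 hi
  have ham := ha.mono (hL.le _) le_rfl
  have hξm := hξ.mono (hL.le _) le_rfl
  have hWm := hL.Ws_meas Finset.univ
  have hVm : Measurable (fun ω => Ws X Finset.univ ω + a ω) := hWm.add ham
  obtain ⟨iA, hA⟩ := hL.stepA hα i hξ ha h0 hi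
  obtain ⟨iE, hE⟩ := hL.stepE hα q0 hQ i hξ ha h0 hi
  have hC := hL.stepC i hξ h0 hi
  have iC := (hL.stepC_int i hξ hi).integral_prod_left
  have hD := hL.stepD (nbc (4*m) i)
  have hfar := hL.far i (Finset.Subset.refl _) (Finset.Subset.refl (nbc (3*m) i))
  have E0 : 0 ≤ ∫ ω, ξ ω ∂μ := integral_nonneg h0
  set R : Ω → ℝ := fun ω => ∑ j ∈ nbc (4*m) i, |X j ω| * (|Ws X (nb m j) ω| * min 1 |Ws X (nb m j) ω|) with hR
  have hRm : Measurable[sg X (nbc (3*m) i)] R := by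
    refine Finset.measurable_fun_sum _ fun j hj => ?_
    have h1 : Measurable[sg X (nbc (3*m) i)] (fun ω => |Ws X (nb m j) ω|) :=
      (continuous_abs.measurable).comp (meas_Ws X (hL.nb_far hj))
    exact ((continuous_abs.measurable).comp (meas_X X (hL.nbc_far i hj))).mul (h1.mul (measurable_const.min h1))
  have hRi : Integrable R μ := integrable_finsetSum _ fun j _ => hL.intR j
  have hRint := indep_integrable hfar hξ hRm hi hRi
  have hRe : ∫ ω, ξ ω * R ω ∂μ ≤ b * ∫ ω, ξ ω ∂μ := by
    rw [indep_mul hfar (hL.le _) (hL.le _) hξ hRm, mul_comm]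
    refine mul_le_mul_of_nonneg_right ?_ E0
    rw [hR, integral_finsetSum _ fun j _ => hL.intR j]
    exact hD
  -- pointwise inequality
  have key : ∀ ω, ∫ t, ξ ω * tz α (Ws X Finset.univ ω + a ω + t) * Mm μ X m i t ∂nu ≤
      ∑ j ∈ nbc (4*m) i, ξ ω * (X j ω * (tf α (Ws X Finset.univ ω + a ω) -
      tf α (Ws X Finset.univ ω + a ω - Ws X (nb m j) ω))) + ξ ω * R ω + 3/4 * α * ξ ω +
      ∫ t, ξ ω * (Mh X m i ω t - Mm μ X m i t)^2 ∂nu := by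
    intro ω
    set V := Ws X Finset.univ ω + a ω with hVd
    have tzm : Measurable (fun t => tz α (V + t)) :=
      (tz_cont α).measurable.comp (measurable_const.add measurable_id)
    have tzb : ∀ t, |tz α (V + t)| ≤ 1 := fun t => by
      rw [abs_of_nonneg (tz_nonneg hα _)]; exact tz_le hα _
    have Mhm : Measurable (fun t => Mh X m i ω t) := (hL.Mh_meas i).comp (measurable_const.prodMk measurable_id)
    have bi : ∀ (f : ℝ → ℝ) (C : ℝ), Measurable f → (∀ t, |f t| ≤ C) → Integrable f nu := fun f C hf hb =>
      (integrable_const C).mono' hf.aestronglyMeasurable (Filter.Eventually.of_forall hb)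
    have i1 : ∀ j, Integrable (fun t => tz α (V + t) * (X j ω * kf (Ws X (nb m j) ω) t)) nu := fun j => by
      refine bi _ |X j ω| (tzm.mul (measurable_const.mul (kf_meas.comp (measurable_const.prodMk measurable_id)))) fun t => ?_
      rw [abs_mul, abs_mul]
      have h1 := kf_abs_le (Ws X (nb m j) ω) t
      have h2 := tzb t
      have h3 : |X j ω| * |kf (Ws X (nb m j) ω) t| ≤ |X j ω| := mul_le_of_le_one_right (abs_nonneg _) h1
      exact (mul_le_of_le_one_left (by positivity) h2).trans h3
    have hsum := Finset.sum_le_sum fun j (_ : j ∈ nbc (4*m) i) => tf_incr hα V (X j ω) (Ws X (nb m j) ω)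
    rw [Finset.sum_sub_distrib, ← integral_finsetSum _ fun j _ => i1 j] at hsum
    have e3 : ∀ t, ∑ j ∈ nbc (4*m) i, tz α (V + t) * (X j ω * kf (Ws X (nb m j) ω) t) =
        tz α (V + t) * Mh X m i ω t := fun t => by
      unfold Mh Kj; rw [Finset.mul_sum]
    simp_rw [e3] at hsum
    have c := ∫ ω, Zs X (nbc (4*m) i) ω ∂μ
    have iM : Integrable (fun t => tz α (V + t) * Mh X m i ω t) nu := by
      refine bi _ (Zs X (nbc (4*m) i) ω) (tzm.mul Mhm) fun t => ?_
      rw [abs_mul]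
      exact (mul_le_of_le_one_left (abs_nonneg _) (tzb t)).trans (Mh_abs i ω t)
    have iMm : Integrable (fun t => tz α (V + t) * Mm μ X m i t) nu := by
      refine bi _ (∫ ω, Zs X (nbc (4*m) i) ω ∂μ) (tzm.mul (hL.Mm_meas i)) fun t => ?_
      rw [abs_mul]
      exact (mul_le_of_le_one_left (abs_nonneg _) (tzb t)).trans (hL.Mm_abs i t)
    have iS : Integrable (fun t => (Mh X m i ω t - Mm μ X m i t)^2) nu := by
      refine bi _ ((Zs X (nbc (4*m) i) ω + ∫ ω, Zs X (nbc (4*m) i) ω ∂μ)^2)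
        ((Mhm.sub (hL.Mm_meas i)).pow_const 2) fun t => ?_
      rw [abs_of_nonneg (sq_nonneg _), sq_le_sq]
      exact (abs_sub _ _).trans ((add_le_add (Mh_abs i _ _) (hL.Mm_abs i _)).trans (le_abs_self _))
    have iT : Integrable (fun t => (tz α (V + t))^2) nu := by
      refine bi _ 1 (tzm.pow_const 2) fun t => ?_
      rw [abs_of_nonneg (sq_nonneg _), sq_le_one_iff_abs_le_one]; exact tzb t
    have hT := tz_sq_int hα V
    have hsq : ∫ t, tz α (V + t) * Mm μ X m i t ∂nu ≤ ∫ t, tz α (V + t) * Mh X m i ω t ∂nu +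
        1/4 * ∫ t, (tz α (V + t))^2 ∂nu + ∫ t, (Mh X m i ω t - Mm μ X m i t)^2 ∂nu := by
      have i4 : Integrable (fun t => tz α (V + t) * Mh X m i ω t + 1/4 * (tz α (V + t))^2) nu :=
        iM.add (iT.const_mul _)
      rw [← integral_const_mul, ← integral_add iM (iT.const_mul _), ← integral_add i4 iS]
      refine integral_mono iMm (i4.add iS) fun t => ?_
      simp only [Pi.add_apply]
      nlinarith [sq_nonneg (1/2 * tz α (V + t) + (Mh X m i ω t - Mm μ X m i t))]
    simp_rw [mul_assoc]
    rw [integral_const_mul, integral_const_mul, ← Finset.mul_sum]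
    have := mul_le_mul_of_nonneg_left (hsq.trans (by linarith :
      _ ≤ ∑ j ∈ nbc (4*m) i, X j ω * (tf α V - tf α (V - Ws X (nb m j) ω)) + R ω + 3/4 * α +
        ∫ t, (Mh X m i ω t - Mm μ X m i t)^2 ∂nu)) (h0 ω)
    linarith
  have iAs := integrable_finsetSum _ iA
  have i5 : Integrable (fun ω => ∑ j ∈ nbc (4*m) i, ξ ω * (X j ω * (tf α (Ws X Finset.univ ω + a ω) -
      tf α (Ws X Finset.univ ω + a ω - Ws X (nb m j) ω))) + ξ ω * R ω) μ := iAs.add hRint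
  have i6 : Integrable (fun ω => ∑ j ∈ nbc (4*m) i, ξ ω * (X j ω * (tf α (Ws X Finset.univ ω + a ω) -
      tf α (Ws X Finset.univ ω + a ω - Ws X (nb m j) ω))) + ξ ω * R ω + 3/4 * α * ξ ω) μ :=
    i5.add (hi.const_mul _)
  have hkey := integral_mono iE (i6.add iC) key
  simp only [Pi.add_apply] at hkey
  rw [integral_add i6 iC, integral_add i5 (hi.const_mul _), integral_add iAs hRint,
    integral_finsetSum _ iA, integral_const_mul] at hkey
  have hon : ∫ ω, ξ ω * on α (Ws X Finset.univ ω + a ω) ∂μ ≤ ∫ ω, ξ ω * tz α (Ws X Finset.univ ω + a ω) ∂μ := by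
    refine integral_mono (int_bdd hi ((on_meas α).comp hVm) (C := 1) fun ω => ?_)
      (int_bdd hi ((tz_cont α).measurable.comp hVm) (C := 1) fun ω => ?_) fun ω => ?_
    · rw [abs_of_nonneg (on_nonneg _ _)]; exact on_le _ _
    · rw [abs_of_nonneg (tz_nonneg hα _)]; exact tz_le hα _
    · exact mul_le_mul_of_nonneg_left (on_le_tz hα _) (h0 ω)
  rw [div_mul_eq_mul_div, le_div_iff₀ (by norm_num)]
  linarith

/-- Concentration inequality -/
lemma LD.conc (hL : LD μ X m κ b) : PropQ μ X m (8*b) (60*b) := by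
  have b0 := hL.b0
  have hα : 0 < 8*b := by linarith
  set s : Set ℝ := {q | 0 ≤ q ∧ PropQ μ X m (8*b) q} with hs
  have hne : s.Nonempty := by
    refine ⟨1, zero_le_one, fun i ξ a hξ ha h0 hi => ?_⟩
    rw [one_mul]
    refine integral_mono_of_nonneg (Filter.Eventually.of_forall fun ω => mul_nonneg (h0 ω) (on_nonneg _ _)) hi
      (Filter.Eventually.of_forall fun ω => mul_le_of_le_one_right (h0 ω) (on_le _ _))
  have hbd : BddBelow s := ⟨0, fun q hq => hq.1⟩
  set q1 := sInf s with hq1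
  have q10 : 0 ≤ q1 := le_csInf hne fun q hq => hq.1
  have hmem : PropQ μ X m (8*b) q1 := by
    intro i ξ a hξ ha h0 hi
    have E0 : 0 ≤ ∫ ω, ξ ω ∂μ := integral_nonneg h0
    rcases E0.eq_or_lt with h | h
    · obtain ⟨q, hq⟩ := hne
      have := hq.2 i ξ a hξ ha h0 hi
      rw [← h] at this ⊢
      simpa using this
    · rw [← div_le_iff₀ h]
      refine le_csInf hne fun q hq => ?_
      rw [div_le_iff₀ h]
      exact hq.2 i ξ a hξ ha h0 hi
  have h2 := hL.conc_step hα q10 hmem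
  have e : (11/4 * (8*b) + 2 * b + 2 * q1 / (8*b) * b) / 0.65 = (24 * b + q1 / 4) / 0.65 := by
    congr 1; field_simp; ring
  rw [e] at h2
  have h3 : q1 ≤ (24 * b + q1 / 4) / 0.65 := csInf_le hbd ⟨by positivity, h2⟩
  rw [le_div_iff₀ (by norm_num)] at h3
  have h4 : q1 ≤ 60 * b := by norm_num at h3; linarith
  intro i ξ a hξ ha h0 hi
  exact (hmem i ξ a hξ ha h0 hi).trans (mul_le_mul_of_nonneg_right h4 (integral_nonneg h0))

end
end BE

namespace BE

lemma mvt {f f' : ℝ → ℝ} (hf : ∀ w, HasDerivAt f (f' w) w) (x y : ℝ) :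
    ∃ u, |u - x| ≤ |y| ∧ f x - f (x - y) = y * f' u := by
  have hc : Continuous f := continuous_iff_continuousAt.mpr fun w => (hf w).continuousAt
  rcases lt_trichotomy y 0 with h | h | h
  · obtain ⟨u, hu, e⟩ := exists_hasDerivAt_eq_slope f f' (by linarith : x < x - y) hc.continuousOn
      (fun w _ => hf w)
    refine ⟨u, ?_, ?_⟩
    · rw [abs_of_neg h, abs_of_nonneg] <;> linarith [hu.1, hu.2]
    · rw [e, show x - y - x = -y by ring]
      have : y ≠ 0 := h.ne
      field_simp; ring
  · refine ⟨x, by simp, by simp [h]⟩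
  · obtain ⟨u, hu, e⟩ := exists_hasDerivAt_eq_slope f f' (by linarith : x - y < x) hc.continuousOn
      (fun w _ => hf w)
    refine ⟨u, ?_, ?_⟩
    · rw [abs_of_pos h, abs_of_nonpos] <;> linarith [hu.1, hu.2]
    · rw [e, show x - (x - y) = y by ring]; field_simp

/-- error envelope -/
noncomputable def env (α z W N ZB ZD : ℝ) : ℝ :=
  4 * (min 1 ZB * (|N| + 1)) + 4 * min 1 ZD + min 1 ZB +
    1 / α * (rp α (W + (-z + min 1 ZB)) - rp α (W + (-z - min 1 ZB)))

lemma hs_anti {α : ℝ} (hα : 0 < α) (z : ℝ) {x y : ℝ} (h : x ≤ y) : hs α z y ≤ hs α z x := by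
  unfold hs
  have := rp_mono α (show x - z ≤ y - z by linarith)
  gcongr

lemma env_bound {α z : ℝ} (hα : 0 < α) {f f' : ℝ → ℝ} (hf : ∀ w, HasDerivAt f (f' w) w)
    {c : ℝ} (hs1 : ∀ w, f' w = w * f w + hs α z w - c) (b1 : ∀ w, |f w| ≤ 2) (b2 : ∀ w, |w * f w| ≤ 1)
    (b3 : ∀ w, |f' w| ≤ 2) {W N ZB ZD u v : ℝ} (hB : 0 ≤ ZB) (hBD : ZB ≤ ZD)
    (hu : |u - W| ≤ ZB) (hv : |v - W| ≤ ZB) (hvN : |v| ≤ |N| + ZD) :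
    |f' u - f' v| ≤ env α z W N ZB ZD := by
  have e : f' u - f' v = (u * f u - v * f v) + (hs α z u - hs α z v) := by rw [hs1, hs1]; ring
  have mB := min_mem ZB hB
  have mD := min_mem ZD (hB.trans hBD)
  have rr := rp_mono α (show W + (-z - min 1 ZB) ≤ W + (-z + min 1 ZB) by linarith)
  have rr2 : 0 ≤ 1/α * (rp α (W + (-z + min 1 ZB)) - rp α (W + (-z - min 1 ZB))) :=
    mul_nonneg (by positivity) (by linarith)
  have hh : |hs α z u - hs α z v| ≤ min 1 ZB +
      1/α * (rp α (W + (-z + min 1 ZB)) - rp α (W + (-z - min 1 ZB))) := by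
    have o1 : |hs α z u - hs α z v| ≤ 1 := by
      rw [abs_le]
      constructor <;> linarith [hs_nonneg hα z u, hs_nonneg hα z v, hs_le hα z u, hs_le hα z v]
    rcases le_total 1 ZB with h | h
    · rw [min_eq_left h] at *; linarith
    · rw [min_eq_right h] at *
      rw [abs_le] at hu hv
      have a1 := hs_anti hα z (show W - ZB ≤ u by linarith)
      have a2 := hs_anti hα z (show W - ZB ≤ v by linarith)
      have a3 := hs_anti hα z (show u ≤ W + ZB by linarith)
      have a4 := hs_anti hα z (show v ≤ W + ZB by linarith)
      have e2 : 1/α * (rp α (W + (-z + ZB)) - rp α (W + (-z - ZB))) = hs α z (W - ZB) - hs α z (W + ZB) := by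
        unfold hs
        rw [show W + (-z + ZB) = W + ZB - z by ring, show W + (-z - ZB) = W - ZB - z by ring]
        ring
      rw [e2, abs_le]
      constructor <;> linarith
  have hg : |u * f u - v * f v| ≤ 4 * (min 1 ZB * (|N| + 1)) + 4 * min 1 ZD := by
    have o1 : |u * f u - v * f v| ≤ 2 := (abs_sub _ _).trans (by linarith [b2 u, b2 v])
    have N0 := abs_nonneg N
    rcases le_total 1 ZB with h | h
    · rw [min_eq_left h] at *; linarith
    · rw [min_eq_right h] at *
      rcases le_total 1 ZD with h' | h'
      · rw [min_eq_left h'] at *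
        have : 0 ≤ ZB * (|N| + 1) := by positivity
        linarith
      · rw [min_eq_right h'] at *
        obtain ⟨x, hx, ex⟩ := mvt hf u (u - v)
        rw [show u - (u - v) = v by ring] at ex
        have huv : |u - v| ≤ 2 * ZB := by
          rw [show u - v = (u - W) - (v - W) by ring]
          exact (abs_sub _ _).trans (by linarith)
        have e3 : u * f u - v * f v = (u - v) * (f u + v * f' x) := by
          have : f u = f v + (u - v) * f' x := by linarith
          rw [show u * f u - v * f v = (u - v) * f u + v * (f u - f v) by ring, ex]; ring
        rw [e3, abs_mul]
        have h4 : |f u + v * f' x| ≤ 2 + (|N| + ZD) * 2 := by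
          refine (abs_add_le _ _).trans (add_le_add (b1 u) ?_)
          rw [abs_mul]
          exact mul_le_mul hvN (b3 x) (abs_nonneg _) (by linarith)
        have := mul_le_mul huv h4 (abs_nonneg _) (by linarith)
        nlinarith
  rw [e]
  refine (abs_add_le _ _).trans ((add_le_add hg hh).trans (le_of_eq ?_))
  unfold env; ring

section
variable {Ω ι : Type*} [mΩ : MeasurableSpace Ω] [Fintype ι] [PseudoMetricSpace ι]
  {μ : Measure Ω} [IsProbabilityMeasure μ] {X : ι → Ω → ℝ} {m κ b : ℝ}

/-- envelope as a random variable -/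
noncomputable def Ev (X : ι → Ω → ℝ) (m α z : ℝ) (i : ι) (ω : Ω) : ℝ :=
  env α z (Ws X Finset.univ ω) (Ws X (nbc (4*m) i) ω) (Zs X (nb (2*m) i) ω) (Zs X (nb (4*m) i) ω)

lemma LD.stepM (hL : LD μ X m κ b) (z : ℝ) (i : ι) {ξ : Ω → ℝ}
    (hξ : Measurable[sg X (nb (2*m) i)] ξ) (h0 : ∀ ω, 0 ≤ ξ ω) (hi : Integrable ξ μ) :
    Integrable (fun ω => ξ ω * Ev X m (8*b) z i ω) μ ∧
    ∫ ω, ξ ω * Ev X m (8*b) z i ω ∂μ ≤ 88/3 * ∫ ω, ξ ω * min 1 (Zs X (nb (4*m) i) ω) ∂μ := by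
  have b0 := hL.b0
  have hα : 0 < 8*b := by linarith
  have hQ := hL.conc
  have hξm := hξ.mono (hL.le _) le_rfl
  have hWm := hL.Ws_meas Finset.univ
  have hfar := hL.far i (Finset.Subset.refl _) (hL.nbc_far i)
  set zB : Ω → ℝ := fun ω => min 1 (Zs X (nb (2*m) i) ω) with hzB
  have zBs : Measurable[sg X (nb (2*m) i)] zB := measurable_const.min (meas_Zs X (Finset.Subset.refl _))
  have zBm : Measurable zB := zBs.mono (hL.le _) le_rfl
  have zB0 : ∀ ω, 0 ≤ zB ω := fun ω => (min_mem _ (Zs_nonneg _ _ _)).1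
  have zB1 : ∀ ω, |zB ω| ≤ 1 := fun ω => min_bdd _ (Zs_nonneg _ _ _)
  have iB : Integrable (fun ω => ξ ω * zB ω) μ := int_bdd hi zBm zB1
  have iD : Integrable (fun ω => ξ ω * min 1 (Zs X (nb (4*m) i) ω)) μ :=
    int_bdd hi (meas_min (hL.Zs_meas _)) fun ω => min_bdd _ (Zs_nonneg _ _ _)
  have hBD : ∫ ω, ξ ω * zB ω ∂μ ≤ ∫ ω, ξ ω * min 1 (Zs X (nb (4*m) i) ω) ∂μ := by
    refine integral_mono iB iD fun ω => mul_le_mul_of_nonneg_left (min_le_min_left _ ?_) (h0 ω)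
    exact Zs_mono X (nb_mono (by linarith [hL.m0]) i) ω
  have B0 : 0 ≤ ∫ ω, ξ ω * zB ω ∂μ := integral_nonneg fun ω => mul_nonneg (h0 ω) (zB0 ω)
  have hNm : Measurable[sg X (nbc (4*m) i)] (fun ω => |Ws X (nbc (4*m) i) ω| + 1) :=
    ((continuous_abs.measurable).comp (meas_Ws X (Finset.Subset.refl _))).add measurable_const
  have hNi0 : Integrable (fun ω => |Ws X (nbc (4*m) i) ω|) μ := (l2_int (hL.Ws_l2 _)).abs
  have hNi : Integrable (fun ω => |Ws X (nbc (4*m) i) ω| + 1) μ := hNi0.add (integrable_const _)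
  have iN : Integrable (fun ω => (ξ ω * zB ω) * (|Ws X (nbc (4*m) i) ω| + 1)) μ :=
    indep_integrable hfar (hξ.mul zBs) hNm iB hNi
  have eN : ∫ ω, (ξ ω * zB ω) * (|Ws X (nbc (4*m) i) ω| + 1) ∂μ ≤ 7/3 * ∫ ω, ξ ω * zB ω ∂μ := by
    have := indep_mul hfar (hL.le _) (hL.le _) (hξ.mul zBs) hNm
    simp only [Pi.mul_apply] at this
    rw [this, integral_add hNi0 (integrable_const _)]
    have h5 := hL.EN i
    simp only [integral_const, probReal_univ, smul_eq_mul, mul_one]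
    nlinarith
  have iR : Integrable (fun ω => ξ ω * (rp (8*b) (Ws X Finset.univ ω + (-z + zB ω)) -
      rp (8*b) (Ws X Finset.univ ω + (-z - zB ω)))) μ := by
    have m1 : Measurable fun ω => Ws X Finset.univ ω + (-z + zB ω) := by fun_prop
    have m2 : Measurable fun ω => Ws X Finset.univ ω + (-z - zB ω) := by fun_prop
    refine int_bdd hi (((rp_cont _).measurable.comp m1).sub ((rp_cont _).measurable.comp m2)) (C := 8*b)
      fun ω => ?_
    rw [abs_le]
    constructor <;> linarith [rp_nonneg (8*b) (Ws X Finset.univ ω + (-z + zB ω)),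
      rp_nonneg (8*b) (Ws X Finset.univ ω + (-z - zB ω)), rp_le hα.le (Ws X Finset.univ ω + (-z + zB ω)),
      rp_le hα.le (Ws X Finset.univ ω + (-z - zB ω))]
  have e1 : ∀ ω, -z + zB ω - (-z - zB ω) = 2 * zB ω := fun ω => by ring
  have eR := PropQ.lip hL hα hQ i hξ (y := fun ω => -z - zB ω) (y' := fun ω => -z + zB ω)
    (measurable_const.sub zBs) (measurable_const.add zBs) h0 (fun ω => by linarith [zB0 ω])
    (by simp only [e1]; refine (iB.const_mul 2).congr (Filter.Eventually.of_forall fun ω => ?_); simp only; ring)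
  have e2 : ∀ ω, ξ ω * (2 * zB ω) = 2 * (ξ ω * zB ω) := fun ω => by ring
  simp only [e1, e2, integral_const_mul] at eR
  have e3 : ∀ ω, ξ ω * Ev X m (8*b) z i ω = 4 * ((ξ ω * zB ω) * (|Ws X (nbc (4*m) i) ω| + 1)) +
      4 * (ξ ω * min 1 (Zs X (nb (4*m) i) ω)) + ξ ω * zB ω +
      1 / (8*b) * (ξ ω * (rp (8*b) (Ws X Finset.univ ω + (-z + zB ω)) -
      rp (8*b) (Ws X Finset.univ ω + (-z - zB ω)))) := by
    intro ω; unfold Ev env; simp only [hzB]; ring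
  simp_rw [e3]
  have j1 : Integrable (fun ω => 4 * ((ξ ω * zB ω) * (|Ws X (nbc (4*m) i) ω| + 1)) +
      4 * (ξ ω * min 1 (Zs X (nb (4*m) i) ω))) μ := (iN.const_mul 4).add (iD.const_mul 4)
  have j2 : Integrable (fun ω => 4 * ((ξ ω * zB ω) * (|Ws X (nbc (4*m) i) ω| + 1)) +
      4 * (ξ ω * min 1 (Zs X (nb (4*m) i) ω)) + ξ ω * zB ω) μ := j1.add iB
  refine ⟨j2.add (iR.const_mul _), ?_⟩
  rw [integral_add j2 (iR.const_mul _), integral_add j1 iB, integral_add (iN.const_mul 4) (iD.const_mul 4),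
    integral_const_mul, integral_const_mul, integral_const_mul]
  have h6 := mul_le_mul_of_nonneg_left eR (by positivity : 0 ≤ 1 / (8*b))
  have e7 : 1 / (8*b) * (60 * b * (2 * ∫ ω, ξ ω * zB ω ∂μ)) = 15 * ∫ ω, ξ ω * zB ω ∂μ := by
    field_simp; ring
  rw [e7] at h6
  linarith

lemma LD.main (hL : LD μ X m κ b) (z : ℝ) :
    |∫ ω, hs (8*b) z (Ws X Finset.univ ω) ∂μ - ∫ x, hs (8*b) z x * gd x| ≤ 176/3 * b := by
  have b0 := hL.b0
  have hα : 0 < 8*b := by linarith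
  obtain ⟨f, f', hf, hfc, hfe, b1, b2, b3⟩ := stein_exists (hs (8*b) z) (hs_cont _ z) (hs_nonneg hα z) (hs_le hα z)
  set Nh := ∫ x, hs (8*b) z x * gd x with hNh
  have fc : Continuous f := continuous_iff_continuousAt.mpr fun w => (hf w).continuousAt
  set W := Ws X Finset.univ with hW
  have hWm : Measurable W := hL.Ws_meas _
  set Y : ι → Ω → ℝ := fun i => Ws X (nb m i) with hY
  set V : ι → Ω → ℝ := fun i => Ws X (nbc (2*m) i) with hV
  have hYm : ∀ i, Measurable (Y i) := fun i => hL.Ws_meas _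
  have hVm : ∀ i, Measurable (V i) := fun i => hL.Ws_meas _
  have bi : ∀ (g : ℝ → ℝ) (C : ℝ), Continuous g → (∀ w, |g w| ≤ C) → ∀ U : Ω → ℝ, Measurable U →
      Integrable (fun ω => g (U ω)) μ := fun g C hg hb U hU =>
    (integrable_const C).mono' (hg.measurable.comp hU).aestronglyMeasurable
      (Filter.Eventually.of_forall fun ω => hb _)
  have iXY : ∀ i, Integrable (fun ω => X i ω * Y i ω) μ := fun i => l2_mul (hL.l2 i) (hL.Ws_l2 _)
  have iXf : ∀ i (U : Ω → ℝ), Measurable U → Integrable (fun ω => X i ω * f (U ω)) μ := fun i U hU =>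
    int_bdd (l2_int (hL.l2 i)) (fc.measurable.comp hU) fun ω => b1 _
  have iXYf : ∀ i, Integrable (fun ω => X i ω * Y i ω * f' (V i ω)) μ := fun i =>
    int_bdd (iXY i) (hfc.measurable.comp (hVm i)) fun ω => b3 _
  set c : ι → ℝ := fun i => ∫ ω, X i ω * Y i ω ∂μ with hc
  have csum : ∑ i, c i = 1 := by
    rw [← hL.var]
    have : ∀ i, c i = ∫ ω, X i ω * W ω ∂μ := fun i => (hL.EXW i).symm
    simp_rw [this]
    rw [← integral_finsetSum _ fun i _ => l2_mul (hL.l2 i) (hL.Ws_l2 _)]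
    refine integral_congr_ae (Filter.Eventually.of_forall fun ω => ?_)
    simp only
    rw [← Finset.sum_mul, pow_two]; rfl
  have i1 := bi f' 2 hfc b3 W hWm
  have i1' := fun i => bi f' 2 hfc b3 (V i) (hVm i)
  -- Stein identity
  have ind1 : ∀ i, ∫ ω, X i ω * Y i ω * f' (V i ω) ∂μ = c i * ∫ ω, f' (V i ω) ∂μ := by
    intro i
    have hi := hL.ind (nb m i) (nbc (2*m) i) (fun k hk l hl => by
      rw [mem_nb] at hk; rw [mem_nbc] at hl
      have := dist_triangle i k l
      linarith)
    have hj : i ∈ nb m i := by rw [mem_nb]; simpa using hL.m0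
    exact indep_mul hi (hL.le _) (hL.le _) ((meas_X X hj).mul (meas_Ws X (Finset.Subset.refl _)))
      (hfc.measurable.comp (meas_Ws X (Finset.Subset.refl _)))
  have z1 : ∀ i, ∫ ω, X i ω * f (W ω - Y i ω) ∂μ = 0 := by
    intro i
    have := hL.zero i (g := fun ω => f (Ws X (nbc m i) ω)) (fc.measurable.comp (meas_Ws X (Finset.Subset.refl _)))
    rw [← this]
    refine integral_congr_ae (Filter.Eventually.of_forall fun ω => ?_)
    simp only [hW, hY]
    rw [Ws_split X m i ω, add_sub_cancel_left]
  have eW : ∫ ω, W ω * f (W ω) ∂μ = ∑ i, ∫ ω, X i ω * (f (W ω) - f (W ω - Y i ω)) ∂μ := by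
    have : ∀ i, ∫ ω, X i ω * (f (W ω) - f (W ω - Y i ω)) ∂μ = ∫ ω, X i ω * f (W ω) ∂μ := by
      intro i
      simp_rw [mul_sub]
      rw [integral_sub (iXf i W hWm) (iXf i (fun ω => W ω - Y i ω) (hWm.sub (hYm i))), z1, sub_zero]
    simp_rw [this]
    rw [← integral_finsetSum _ fun i _ => iXf i W hWm]
    refine integral_congr_ae (Filter.Eventually.of_forall fun ω => ?_)
    simp only
    rw [← Finset.sum_mul]; rfl
  have iWf : Integrable (fun ω => W ω * f (W ω)) μ :=
    bi (fun w => w * f w) 1 (continuous_id.mul fc) b2 W hWm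
  have iX2 : ∀ i, Integrable (fun ω => X i ω * (f (W ω) - f (W ω - Y i ω))) μ := fun i => by
    simp_rw [mul_sub]
    exact (iXf i W hWm).sub (iXf i (fun ω => W ω - Y i ω) (hWm.sub (hYm i)))
  have stein : ∫ ω, hs (8*b) z (W ω) ∂μ - Nh = ∑ i, (c i * ∫ ω, (f' (W ω) - f' (V i ω)) ∂μ +
      ∫ ω, (X i ω * Y i ω * f' (V i ω) - X i ω * (f (W ω) - f (W ω - Y i ω))) ∂μ) := by
    have a1 : ∫ ω, hs (8*b) z (W ω) ∂μ - Nh = ∫ ω, f' (W ω) ∂μ - ∫ ω, W ω * f (W ω) ∂μ := by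
      have ih : Integrable (fun ω => hs (8*b) z (W ω)) μ := bi _ 1 (hs_cont _ z) (fun w => by
        rw [abs_of_nonneg (hs_nonneg hα z w)]; exact hs_le hα z w) W hWm
      have e : ∀ ω, f' (W ω) = (W ω * f (W ω) + hs (8*b) z (W ω)) - Nh := fun ω => hfe _
      simp_rw [e]
      rw [integral_sub (f := fun ω => W ω * f (W ω) + hs (8*b) z (W ω)) (iWf.add ih) (integrable_const _),
        integral_add iWf ih]
      simp only [integral_const, probReal_univ, smul_eq_mul, one_mul]
      ring
    rw [a1, eW, Finset.sum_add_distrib]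
    have a2 : ∀ i, c i * ∫ ω, (f' (W ω) - f' (V i ω)) ∂μ =
        c i * ∫ ω, f' (W ω) ∂μ - ∫ ω, X i ω * Y i ω * f' (V i ω) ∂μ := by
      intro i
      rw [integral_sub i1 (i1' i), ind1]; ring
    have a3 : ∀ i, ∫ ω, (X i ω * Y i ω * f' (V i ω) - X i ω * (f (W ω) - f (W ω - Y i ω))) ∂μ =
        ∫ ω, X i ω * Y i ω * f' (V i ω) ∂μ - ∫ ω, X i ω * (f (W ω) - f (W ω - Y i ω)) ∂μ :=
      fun i => integral_sub (iXYf i) (iX2 i)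
    simp_rw [a2, a3, Finset.sum_sub_distrib, ← Finset.sum_mul]
    rw [csum]; ring
  rw [stein]
  -- pointwise bounds
  have hZ0 := fun i ω => Zs_nonneg X (nb (2*m) i) ω
  have hZ1 := fun i ω => Zs_mono X (nb_mono (by linarith [hL.m0] : 2*m ≤ 4*m) i) ω
  have vW : ∀ i ω, |V i ω - W ω| ≤ Zs X (nb (2*m) i) ω := fun i ω => by
    have : V i ω - W ω = -Ws X (nb (2*m) i) ω := by
      simp only [hV, hW]; rw [Ws_split X (2*m) i ω]; ring
    rw [this, abs_neg]; exact Ws_le_Zs _ _ _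
  have vN : ∀ i ω, |V i ω| ≤ |Ws X (nbc (4*m) i) ω| + Zs X (nb (4*m) i) ω := fun i ω => by
    classical
    have hsub : nbc (4*m) i ⊆ nbc (2*m) i := by
      intro l hl; rw [mem_nbc] at *; linarith [hL.m0]
    have e : V i ω = Ws X (nbc (4*m) i) ω + Ws X (nbc (2*m) i \ nbc (4*m) i) ω := by
      simp only [hV]; unfold Ws
      rw [add_comm, Finset.sum_sdiff hsub]
    rw [e]
    refine (abs_add_le _ _).trans (add_le_add le_rfl ((Ws_le_Zs _ _ _).trans (Zs_mono X ?_ ω)))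
    intro l hl
    rw [Finset.mem_sdiff, mem_nbc, mem_nbc, not_lt] at hl
    rw [mem_nb]; exact hl.2
  have p1 : ∀ i ω, |f' (W ω) - f' (V i ω)| ≤ Ev X m (8*b) z i ω := fun i ω =>
    env_bound hα hf hfe b1 b2 b3 (hZ0 i ω) (hZ1 i ω) (by rw [← hW, sub_self, abs_zero]; exact hZ0 i ω) (vW i ω) (vN i ω)
  have p2 : ∀ i ω, |X i ω * Y i ω * f' (V i ω) - X i ω * (f (W ω) - f (W ω - Y i ω))| ≤
      |X i ω * Y i ω| * Ev X m (8*b) z i ω := by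
    intro i ω
    obtain ⟨u, hu, e⟩ := mvt hf (W ω) (Y i ω)
    have hYZ : |Y i ω| ≤ Zs X (nb (2*m) i) ω :=
      (Ws_le_Zs _ _ _).trans (Zs_mono X (nb_mono (by linarith [hL.m0]) i) ω)
    have := env_bound hα hf hfe b1 b2 b3 (hZ0 i ω) (hZ1 i ω) (hu.trans hYZ) (vW i ω) (vN i ω)
    rw [e, show X i ω * Y i ω * f' (V i ω) - X i ω * (Y i ω * f' u) =
      -(X i ω * Y i ω * (f' u - f' (V i ω))) by ring, abs_neg, abs_mul]
    exact mul_le_mul_of_nonneg_left this (abs_nonneg _)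
  have hDle : ∀ i ω, |X i ω * Y i ω| ≤ |X i ω| * Zs X (nb (4*m) i) ω := fun i ω => by
    rw [abs_mul]; exact mul_le_mul_of_nonneg_left (hL.Y_le i ω) (abs_nonneg _)
  have iD : ∀ i, Integrable (fun ω => |X i ω| * Zs X (nb (4*m) i) ω) μ := fun i =>
    l2_mul (hL.l2 i).abs (hL.Zs_l2 _)
  have q1 : ∀ i, |c i * ∫ ω, (f' (W ω) - f' (V i ω)) ∂μ| ≤ 88/3 *
      ((∫ ω, |X i ω| * Zs X (nb (4*m) i) ω ∂μ) * (∫ ω, min 1 (Zs X (nb (4*m) i) ω) ∂μ)) := by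
    intro i
    obtain ⟨j1, j2⟩ := hL.stepM z i (ξ := fun _ => 1) measurable_const (fun _ => zero_le_one) (integrable_const _)
    simp only [one_mul] at j1 j2
    have h1 : |∫ ω, (f' (W ω) - f' (V i ω)) ∂μ| ≤ ∫ ω, Ev X m (8*b) z i ω ∂μ :=
      abs_integral_le_integral_abs.trans (integral_mono (i1.sub (i1' i)).abs j1 (p1 i))
    have h2 : |c i| ≤ ∫ ω, |X i ω| * Zs X (nb (4*m) i) ω ∂μ :=
      abs_integral_le_integral_abs.trans (integral_mono (iXY i).abs (iD i) (hDle i))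
    rw [abs_mul]
    refine (mul_le_mul h2 (h1.trans j2) (abs_nonneg _) ((abs_nonneg _).trans h2)).trans (le_of_eq (by ring))
  have q2 : ∀ i, |∫ ω, (X i ω * Y i ω * f' (V i ω) - X i ω * (f (W ω) - f (W ω - Y i ω))) ∂μ| ≤
      88/3 * ∫ ω, |X i ω| * Zs X (nb (4*m) i) ω * min 1 (Zs X (nb (4*m) i) ω) ∂μ := by
    intro i
    have hj : i ∈ nb (2*m) i := by rw [mem_nb]; simpa using hL.m0
    have hsub : nb m i ⊆ nb (2*m) i := nb_mono (by linarith [hL.m0]) i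
    have hm : Measurable[sg X (nb (2*m) i)] (fun ω => |X i ω * Y i ω|) :=
      (continuous_abs.measurable).comp ((meas_X X hj).mul (meas_Ws X hsub))
    obtain ⟨j1, j2⟩ := hL.stepM z i hm (fun _ => abs_nonneg _) (iXY i).abs
    refine abs_integral_le_integral_abs.trans
      ((integral_mono ((iXYf i).sub (iX2 i)).abs j1 (p2 i)).trans (j2.trans ?_))
    refine mul_le_mul_of_nonneg_left ?_ (by norm_num)
    refine integral_mono (int_bdd (iXY i).abs (meas_min (hL.Zs_meas _))
      fun ω => min_bdd _ (Zs_nonneg _ _ _)) (hL.int1 i) fun ω => ?_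
    exact mul_le_mul_of_nonneg_right (hDle i ω) (min_mem _ (Zs_nonneg _ _ _)).1
  refine (Finset.abs_sum_le_sum_abs _ _).trans ((Finset.sum_le_sum fun i _ =>
    (abs_add_le _ _).trans (add_le_add (q1 i) (q2 i))).trans ?_)
  rw [Finset.sum_add_distrib, ← Finset.mul_sum, ← Finset.mul_sum]
  linarith [hL.H1, hL.H2]

lemma LD.final (hL : LD μ X m κ b) (z : ℝ) :
    |(μ {ω | Ws X Finset.univ ω ≤ z}).toReal - stdGaussianCDF z| ≤ 75 * b := by
  have b0 := hL.b0
  have := smoothing (μ := μ) (hL.Ws_meas Finset.univ) (by linarith : 0 < 8*b) (hL.main) z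
  linarith

end
end BE

namespace BE

lemma min_le_rpow {p w : ℝ} (hp : 2 < p) (hp3 : p ≤ 3) (hw : 0 ≤ w) : min 1 w ≤ w ^ (p - 2) := by
  rcases le_total 1 w with h | h
  · rw [min_eq_left h]; exact Real.one_le_rpow h (by linarith)
  · rw [min_eq_right h]
    calc w = w ^ (1:ℝ) := (Real.rpow_one w).symm
      _ ≤ w ^ (p - 2) := Real.rpow_le_rpow_of_exponent_ge' hw h (by linarith) (by linarith)

lemma young {p u v w : ℝ} (hp : 2 < p) (hp3 : p ≤ 3) (hu : 0 ≤ u) (hv : 0 ≤ v) (hw : 0 ≤ w) :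
    u * v * min 1 w ≤ 1/p * u^p + 1/p * v^p + (p-2)/p * w^p := by
  have p0 : 0 < p := by linarith
  have h := Real.geom_mean_le_arith_mean3_weighted (w₁ := 1/p) (w₂ := 1/p) (w₃ := (p-2)/p)
    (p₁ := u^p) (p₂ := v^p) (p₃ := w^p) (by positivity) (by positivity) (div_nonneg (by linarith) p0.le)
    (Real.rpow_nonneg hu _) (Real.rpow_nonneg hv _) (Real.rpow_nonneg hw _) (by field_simp; ring)
  rw [← Real.rpow_mul hu, ← Real.rpow_mul hv, ← Real.rpow_mul hw,
    show p * (1/p) = 1 by field_simp, show p * ((p-2)/p) = p - 2 by field_simp, Real.rpow_one, Real.rpow_one] at h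
  exact (mul_le_mul_of_nonneg_left (min_le_rpow hp hp3 hw) (mul_nonneg hu hv)).trans h

lemma sq_le_rpow {p z : ℝ} (hp : 2 < p) (hp3 : p ≤ 3) (hz : 0 ≤ z) : z^2 ≤ 1/25 + 5 * z^p := by
  have hzp := Real.rpow_nonneg hz p
  rcases le_total z (1/5) with h | h
  · nlinarith
  · have z0 : 0 < z := by linarith
    have e : z^p = z^2 * z^(p-2) := by
      rw [← Real.rpow_natCast z 2, ← Real.rpow_add z0]; congr 1; push_cast; ring
    have h1 : (1/5:ℝ) ≤ z^(p-2) := by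
      calc (1/5:ℝ) = (1/5:ℝ)^(1:ℝ) := (Real.rpow_one _).symm
        _ ≤ (1/5:ℝ)^(p-2) := Real.rpow_le_rpow_of_exponent_ge' (by norm_num) (by norm_num) (by linarith) (by linarith)
        _ ≤ _ := Real.rpow_le_rpow (by norm_num) h (by linarith)
    rw [e]
    nlinarith [sq_nonneg z]

section
variable {Ω ι : Type*} [mΩ : MeasurableSpace Ω] [Fintype ι] [PseudoMetricSpace ι]
  {μ : Measure Ω} [IsProbabilityMeasure μ] {X : ι → Ω → ℝ} {m κ b : ℝ}

lemma double_count (r κ : ℝ) (hκ : ∀ i : ι, ((nb r i).card : ℝ) ≤ κ) (e : ι → ℝ) (he : ∀ k, 0 ≤ e k) :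
    ∑ i : ι, ∑ k ∈ nb r i, e k ≤ κ * ∑ k, e k := by
  classical
  have h1 : ∀ i : ι, ∑ k ∈ nb r i, e k = ∑ k, if dist i k ≤ r then e k else 0 := fun i => by
    rw [← Finset.sum_filter]; unfold nb; congr
  simp_rw [h1]
  rw [Finset.sum_comm, Finset.mul_sum]
  refine Finset.sum_le_sum fun k _ => ?_
  simp_rw [dist_comm _ k]
  rw [← Finset.sum_filter, Finset.sum_const, nsmul_eq_mul]
  refine mul_le_mul_of_nonneg_right (le_trans (le_of_eq ?_) (hκ k)) (he k)
  unfold nb; congr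

lemma LD.of_p {p : ℝ} (hp : 2 < p) (hp3 : p ≤ 3)
    (meas : ∀ i, Measurable (X i)) (mean : ∀ i, ∫ ω, X i ω ∂μ = 0)
    (hIg : ∀ i, Integrable (fun ω => |X i ω| ^ p) μ)
    (ind : ∀ S T : Finset ι, (∀ i ∈ S, ∀ j ∈ T, m < dist i j) → Indep (sg X S) (sg X T) μ)
    (m0 : 0 ≤ m) (card : ∀ i : ι, ((nb (4*m) i).card : ℝ) ≤ κ) (κ1 : 1 ≤ κ)
    (var : ∫ ω, (Ws X Finset.univ ω)^2 ∂μ = 1) (b0 : 0 < b) (b1 : b ≤ 1/75)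
    (hb : κ ^ (p-1) * ∑ i, ∫ ω, |X i ω| ^ p ∂μ ≤ b) : LD μ X m κ b := by
  have p0 : 0 < p := by linarith
  have κ0 : 0 < κ := by linarith
  set B : ι → Ω → ℝ := fun k ω => κ^(p-1) * |X k ω|^p with hB
  have B0 : ∀ k ω, 0 ≤ B k ω := fun k ω => by positivity
  have Bi : ∀ k, Integrable (B k) μ := fun k => (hIg k).const_mul _
  set P : ι → Ω → ℝ := fun i ω => ∑ k ∈ nb (4*m) i, B k ω with hP
  have P0 : ∀ i ω, 0 ≤ P i ω := fun i ω => Finset.sum_nonneg fun k _ => B0 k ω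
  have Pint : ∀ i, Integrable (P i) μ := fun i => integrable_finsetSum _ fun k _ => Bi k
  set eB : ι → ℝ := fun k => ∫ ω, B k ω ∂μ with heB
  have eB0 : ∀ k, 0 ≤ eB k := fun k => integral_nonneg (B0 k)
  have hβ : ∑ k, eB k ≤ b := by
    refine le_trans (le_of_eq ?_) hb
    rw [Finset.mul_sum]
    exact Finset.sum_congr rfl fun k _ => integral_const_mul _ _
  have eP : ∀ i, ∫ ω, P i ω ∂μ = ∑ k ∈ nb (4*m) i, eB k := fun i => integral_finsetSum _ fun k _ => Bi k
  have hPsum : ∑ i, 1/κ * ∫ ω, P i ω ∂μ ≤ b := by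
    rw [← Finset.mul_sum]
    simp_rw [eP]
    have := double_count (4*m) κ card eB eB0
    calc 1/κ * _ ≤ 1/κ * (κ * ∑ k, eB k) := mul_le_mul_of_nonneg_left this (by positivity)
      _ = ∑ k, eB k := by field_simp
      _ ≤ b := hβ
  have hz : ∀ i ω, (Zs X (nb (4*m) i) ω)^p ≤ P i ω := by
    intro i ω
    have h1 := Real.rpow_sum_le_const_mul_sum_rpow (nb (4*m) i) (fun k => X k ω) (p := p) (by linarith)
    unfold Zs
    refine h1.trans ?_
    simp only [hP, hB]
    rw [← Finset.mul_sum]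
    refine mul_le_mul_of_nonneg_right (Real.rpow_le_rpow (Nat.cast_nonneg _) (card i) (by linarith))
      (Finset.sum_nonneg fun k _ => Real.rpow_nonneg (abs_nonneg _) _)
  have hU : ∀ i ω, 1/κ * (κ * |X i ω|)^p = B i ω := by
    intro i ω
    simp only [hB]
    rw [Real.mul_rpow κ0.le (abs_nonneg _), Real.rpow_sub_one κ0.ne']
    ring
  have l2 : ∀ i, MemLp (X i) 2 μ := by
    intro i
    rw [memLp_two_iff_integrable_sq (meas i).aestronglyMeasurable]
    refine ((integrable_const (1/25:ℝ)).add ((hIg i).const_mul 5)).mono'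
      ((meas i).pow_const 2).aestronglyMeasurable (Filter.Eventually.of_forall fun ω => ?_)
    simp only [Real.norm_eq_abs, abs_of_nonneg (sq_nonneg (X i ω)), Pi.add_apply]
    have := sq_le_rpow hp hp3 (abs_nonneg (X i ω))
    rwa [sq_abs] at this
  have c1 : 0 ≤ 1/p := by positivity
  have c2 : 0 ≤ (p-2)/p := div_nonneg (by linarith) p0.le
  have csum : 1/p + 1/p + (p-2)/p = 1 := by field_simp; ring
  -- trilinear bound
  have tri : ∀ i ω ω', |X i ω| * Zs X (nb (4*m) i) ω * min 1 (Zs X (nb (4*m) i) ω') ≤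
      1/p * B i ω + 1/p * (1/κ * P i ω) + (p-2)/p * (1/κ * P i ω') := by
    intro i ω ω'
    have hy := young hp hp3 (mul_nonneg κ0.le (abs_nonneg (X i ω))) (Zs_nonneg X (nb (4*m) i) ω)
      (Zs_nonneg X (nb (4*m) i) ω')
    have h1 := mul_le_mul_of_nonneg_left hy (by positivity : 0 ≤ 1/κ)
    have e : 1/κ * (κ * |X i ω| * Zs X (nb (4*m) i) ω * min 1 (Zs X (nb (4*m) i) ω')) =
      |X i ω| * Zs X (nb (4*m) i) ω * min 1 (Zs X (nb (4*m) i) ω') := by field_simp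
    rw [e] at h1
    refine h1.trans ?_
    rw [← hU i ω]
    have a1 := mul_le_mul_of_nonneg_left (hz i ω) (mul_nonneg c1 (by positivity : 0 ≤ 1/κ))
    have a2 := mul_le_mul_of_nonneg_left (hz i ω') (mul_nonneg c2 (by positivity : 0 ≤ 1/κ))
    linarith
  have fin : ∑ i, (1/p * eB i + 1/p * (1/κ * ∫ ω, P i ω ∂μ) + (p-2)/p * (1/κ * ∫ ω, P i ω ∂μ)) ≤ b := by
    have e : ∑ i, (1/p * eB i + 1/p * (1/κ * ∫ ω, P i ω ∂μ) + (p-2)/p * (1/κ * ∫ ω, P i ω ∂μ)) =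
        1/p * ∑ i, eB i + 1/p * ∑ i, 1/κ * ∫ ω, P i ω ∂μ + (p-2)/p * ∑ i, 1/κ * ∫ ω, P i ω ∂μ := by
      simp only [Finset.sum_add_distrib, Finset.mul_sum]
    rw [e]
    have a1 := mul_le_mul_of_nonneg_left hβ c1
    have a2 := mul_le_mul_of_nonneg_left hPsum c1
    have a3 := mul_le_mul_of_nonneg_left hPsum c2
    calc _ ≤ 1/p * b + 1/p * b + (p-2)/p * b := by linarith
      _ = (1/p + 1/p + (p-2)/p) * b := by ring
      _ = b := by rw [csum, one_mul]
  have mn0 : ∀ i ω, 0 ≤ min 1 (Zs X (nb (4*m) i) ω) := fun i ω => (min_mem _ (Zs_nonneg _ _ _)).1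
  have xz0 : ∀ i ω, 0 ≤ |X i ω| * Zs X (nb (4*m) i) ω := fun i ω => mul_nonneg (abs_nonneg _) (Zs_nonneg _ _ _)
  have J1 : ∀ i, Integrable (fun ω => 1/p * B i ω + 1/p * (1/κ * P i ω)) μ := fun i =>
    ((Bi i).const_mul _).add (((Pint i).const_mul _).const_mul _)
  refine ⟨meas, l2, mean, ind, m0, card, var, b0, b1, ?_, ?_, ?_, ?_⟩
  · refine le_trans (Finset.sum_le_sum fun i _ => ?_) fin
    calc _ ≤ ∫ ω, (1/p * B i ω + 1/p * (1/κ * P i ω) + (p-2)/p * (1/κ * P i ω)) ∂μ := by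
          refine integral_mono_of_nonneg (Filter.Eventually.of_forall fun ω => mul_nonneg (xz0 i ω) (mn0 i ω))
            ((J1 i).add (((Pint i).const_mul _).const_mul _)) (Filter.Eventually.of_forall fun ω => tri i ω ω)
      _ = _ := by
          rw [integral_add (J1 i) (((Pint i).const_mul _).const_mul _),
            integral_add ((Bi i).const_mul _) (((Pint i).const_mul _).const_mul _)]
          simp only [integral_const_mul, heB]
  · refine le_trans (Finset.sum_le_sum fun i _ => ?_) fin
    have s1 : ∀ ω, |X i ω| * Zs X (nb (4*m) i) ω * (∫ ω', min 1 (Zs X (nb (4*m) i) ω') ∂μ) ≤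
        1/p * B i ω + 1/p * (1/κ * P i ω) + (p-2)/p * (1/κ * ∫ ω', P i ω' ∂μ) := by
      intro ω
      rw [← integral_const_mul]
      calc _ ≤ ∫ ω', ((1/p * B i ω + 1/p * (1/κ * P i ω)) + (p-2)/p * (1/κ * P i ω')) ∂μ := by
            refine integral_mono_of_nonneg (Filter.Eventually.of_forall fun ω' => mul_nonneg (xz0 i ω) (mn0 i ω'))
              ((integrable_const _).add (((Pint i).const_mul _).const_mul _))
              (Filter.Eventually.of_forall fun ω' => tri i ω ω')
        _ = _ := by
            rw [integral_add (integrable_const _) (((Pint i).const_mul _).const_mul _)]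
            simp only [integral_const_mul, integral_const, probReal_univ, smul_eq_mul, one_mul]
    rw [← integral_mul_const]
    calc _ ≤ ∫ ω, (1/p * B i ω + 1/p * (1/κ * P i ω) + (p-2)/p * (1/κ * ∫ ω', P i ω' ∂μ)) ∂μ := by
          refine integral_mono_of_nonneg (Filter.Eventually.of_forall fun ω =>
            mul_nonneg (xz0 i ω) (integral_nonneg (mn0 i)))
            ((J1 i).add (integrable_const _)) (Filter.Eventually.of_forall s1)
      _ = _ := by
          rw [integral_add (J1 i) (integrable_const _),
            integral_add ((Bi i).const_mul _) (((Pint i).const_mul _).const_mul _)]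
          simp only [integral_const_mul, integral_const, probReal_univ, smul_eq_mul, one_mul, heB]
  · rw [Finset.mul_sum]
    have fin3 : ∑ i, (1/p * eB i + 1/p * eB i + (p-2)/p * (1/κ * ∫ ω, P i ω ∂μ)) ≤ b := by
      rw [Finset.sum_add_distrib, Finset.sum_add_distrib, ← Finset.mul_sum, ← Finset.mul_sum]
      have a1 := mul_le_mul_of_nonneg_left hβ c1
      have a3 := mul_le_mul_of_nonneg_left hPsum c2
      calc _ ≤ 1/p * b + 1/p * b + (p-2)/p * b := by linarith
        _ = (1/p + 1/p + (p-2)/p) * b := by ring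
        _ = b := by rw [csum, one_mul]
    refine le_trans (Finset.sum_le_sum fun i _ => ?_) fin3
    rw [← integral_const_mul]
    have J2 : Integrable (fun ω => 1/p * B i ω + 1/p * B i ω) μ :=
      ((Bi i).const_mul _).add ((Bi i).const_mul _)
    calc _ ≤ ∫ ω, (1/p * B i ω + 1/p * B i ω + (p-2)/p * (1/κ * P i ω)) ∂μ := by
          refine integral_mono_of_nonneg (Filter.Eventually.of_forall fun ω =>
            mul_nonneg κ0.le (mul_nonneg (sq_nonneg _) (mn0 i ω)))
            (J2.add (((Pint i).const_mul _).const_mul _)) (Filter.Eventually.of_forall fun ω => ?_)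
          simp only
          have hX := mul_nonneg κ0.le (abs_nonneg (X i ω))
          have hy := young hp hp3 hX hX (Zs_nonneg X (nb (4*m) i) ω)
          have h1 := mul_le_mul_of_nonneg_left hy (by positivity : 0 ≤ 1/κ)
          have e : 1/κ * (κ * |X i ω| * (κ * |X i ω|) * min 1 (Zs X (nb (4*m) i) ω)) =
            κ * ((X i ω)^2 * min 1 (Zs X (nb (4*m) i) ω)) := by
            rw [← sq_abs]; field_simp
          rw [e] at h1
          refine h1.trans ?_
          rw [← hU i ω]
          have a2 := mul_le_mul_of_nonneg_left (hz i ω) (mul_nonneg c2 (by positivity : 0 ≤ 1/κ))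
          linarith
      _ = _ := by
          rw [integral_add J2 (((Pint i).const_mul _).const_mul _),
            integral_add ((Bi i).const_mul _) ((Bi i).const_mul _)]
          simp only [integral_const_mul, heB]
  · intro i
    calc _ ≤ ∫ ω, (1/25 + 5 * P i ω) ∂μ := by
          refine integral_mono_of_nonneg (Filter.Eventually.of_forall fun ω => sq_nonneg _)
            ((integrable_const _).add ((Pint i).const_mul _)) (Filter.Eventually.of_forall fun ω => ?_)
          have h1 := sq_le_rpow hp hp3 (Zs_nonneg X (nb (4*m) i) ω)
          have h2 := hz i ω
          simp only
          linarith
      _ = 1/25 + 5 * ∫ ω, P i ω ∂μ := by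
          rw [integral_add (integrable_const _) ((Pint i).const_mul _), integral_const_mul]
          simp
      _ ≤ 1/9 := by
          have h3 : ∫ ω, P i ω ∂μ ≤ b := by
            rw [eP]
            exact (Finset.sum_le_sum_of_subset_of_nonneg (Finset.subset_univ _) fun k _ _ => eB0 k).trans hβ
          linarith
end

lemma far_iff {d : ℕ} (m : ℕ) (i j : Fin d → ℤ) (h : (m:ℝ) < dist i j) : ∃ l, (m : ℤ) < |i l - j l| := by
  by_contra hc
  push Not at hc
  refine absurd h (not_lt.mpr ((dist_pi_le_iff (Nat.cast_nonneg m)).mpr fun l => ?_))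
  rw [Int.dist_eq]
  exact_mod_cast hc l

lemma card_box {d : ℕ} (J : Finset (Fin d → ℤ)) (m : ℕ) (i : J) :
    ((nb (4 * (m:ℝ)) i).card : ℝ) ≤ (10 * (m:ℝ) + 1)^d := by
  have h1 : (nb (4 * (m:ℝ)) i).card ≤
      (Fintype.piFinset fun l : Fin d => Finset.Icc (i.1 l - 4 * m) (i.1 l + 4 * m)).card := by
    refine Finset.card_le_card_of_injOn (fun j => j.1) (fun j hj => ?_) (Subtype.val_injective.injOn)
    rw [Finset.mem_coe, mem_nb] at hj
    rw [Finset.mem_coe, Fintype.mem_piFinset]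
    intro l
    have h2 : dist (i.1 l) (j.1 l) ≤ 4 * (m:ℝ) := (dist_le_pi_dist i.1 j.1 l).trans hj
    rw [Int.dist_eq] at h2
    have h3 : |i.1 l - j.1 l| ≤ 4 * (m:ℤ) := by exact_mod_cast h2
    rw [abs_le] at h3
    rw [Finset.mem_Icc]
    constructor <;> linarith
  have h4 : (Fintype.piFinset fun l : Fin d => Finset.Icc (i.1 l - 4 * m) (i.1 l + 4 * (m:ℤ))).card = (8*m+1)^d := by
    rw [Fintype.card_piFinset]
    have : ∀ l : Fin d, (Finset.Icc (i.1 l - 4 * m) (i.1 l + 4 * (m:ℤ))).card = 8*m+1 := fun l => by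
      rw [Int.card_Icc]; omega
    simp [this]
  rw [h4] at h1
  have h5 : ((nb (4 * (m:ℝ)) i).card : ℝ) ≤ (8 * (m:ℝ) + 1)^d := by exact_mod_cast h1
  refine h5.trans ?_
  gcongr
  norm_num

end BE

open BE
theorem stmt_5
    {Ω : Type*} [MeasurableSpace Ω] {μ : Measure Ω} [IsProbabilityMeasure μ]
    (d : ℕ) (hd : 0 < d) (J : Finset (Fin d → ℤ)) (m : ℕ)
    (p : ℝ) (hp : 2 < p ∧ p ≤ 3)
    (X : (Fin d → ℤ) → Ω → ℝ)
    (hXmeas : ∀ i ∈ J, Measurable (X i))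
    (hXmean : ∀ i ∈ J, ∫ ω, X i ω ∂μ = 0)
    (hXp : ∀ i ∈ J, Integrable (fun ω => |X i ω| ^ p) μ)
    (hmdep : ∀ A B : Finset (Fin d → ℤ), A ⊆ J → B ⊆ J →
      (∀ i ∈ A, ∀ j ∈ B, ∃ l, (m : ℤ) < |i l - j l|) →
      IndepFun (fun ω => fun a : (A : Finset (Fin d → ℤ)) => X a.1 ω)
        (fun ω => fun b : (B : Finset (Fin d → ℤ)) => X b.1 ω) μ)
    (W : Ω → ℝ) (hW : ∀ ω, W ω = ∑ i ∈ J, X i ω)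
    (hWvar : ∫ ω, (W ω) ^ 2 ∂μ = 1) :
    ∀ z : ℝ, |(μ {ω | W ω ≤ z}).toReal - stdGaussianCDF z| ≤
      75 * ((10 * (m : ℝ) + 1) ^ ((p - 1) * d)) * ∑ i ∈ J, ∫ ω, |X i ω| ^ p ∂μ := by
  intro z
  set X' : J → Ω → ℝ := fun i => X i.1 with hX'
  have hWs : ∀ ω, Ws X' Finset.univ ω = W ω := fun ω => by
    rw [hW]; exact Finset.sum_coe_sort J (fun i => X i ω)
  have hWf : Ws X' Finset.univ = W := funext hWs
  have hsum : ∑ i ∈ J, ∫ ω, |X i ω| ^ p ∂μ = ∑ i, ∫ ω, |X' i ω| ^ p ∂μ :=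
    (Finset.sum_coe_sort J (fun i => ∫ ω, |X i ω| ^ p ∂μ)).symm
  have hm1 : (0:ℝ) ≤ 10 * (m:ℝ) + 1 := by positivity
  have hκ : ((10 * (m:ℝ) + 1) ^ ((p - 1) * d)) = ((10 * (m:ℝ) + 1)^d) ^ (p - 1) := by
    rw [← Real.rpow_natCast, ← Real.rpow_mul hm1, mul_comm (p - 1) (d:ℝ)]
  rw [hsum, hκ, mul_assoc]
  set β := ((10 * (m:ℝ) + 1)^d) ^ (p - 1) * ∑ i, ∫ ω, |X' i ω| ^ p ∂μ with hβ
  have β0 : 0 ≤ β := mul_nonneg (Real.rpow_nonneg (by positivity) _)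
    (Finset.sum_nonneg fun i _ => integral_nonneg fun ω => Real.rpow_nonneg (abs_nonneg _) _)
  have ind : ∀ S T : Finset J, (∀ i ∈ S, ∀ j ∈ T, (m:ℝ) < dist i j) → Indep (sg X' S) (sg X' T) μ := by
    intro S T h
    have hS : S.map (Function.Embedding.subtype _) ⊆ J := by
      intro x hx; rw [Finset.mem_map] at hx; obtain ⟨y, _, rfl⟩ := hx; exact y.2
    have hT : T.map (Function.Embedding.subtype _) ⊆ J := by
      intro x hx; rw [Finset.mem_map] at hx; obtain ⟨y, _, rfl⟩ := hx; exact y.2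
    have hI := hmdep _ _ hS hT (by
      intro i hi j hj
      rw [Finset.mem_map] at hi hj
      obtain ⟨i, hi, rfl⟩ := hi
      obtain ⟨j, hj, rfl⟩ := hj
      exact far_iff m _ _ (h i hi j hj))
    rw [IndepFun_iff_Indep] at hI
    have hle : ∀ S : Finset J, sg X' S ≤ MeasurableSpace.comap
        (fun ω (a : (S.map (Function.Embedding.subtype _) : Finset (Fin d → ℤ))) => X a.1 ω) inferInstance := by
      intro S
      unfold sg
      rw [show (fun ω (a : S) => X' a.1 ω) =
        (fun (g : (S.map (Function.Embedding.subtype _) : Finset (Fin d → ℤ)) → ℝ) (a : S) =>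
          g ⟨a.1.1, Finset.mem_map.mpr ⟨a.1, a.2, rfl⟩⟩) ∘
        (fun ω (a : (S.map (Function.Embedding.subtype _) : Finset (Fin d → ℤ))) => X a.1 ω) from rfl,
        ← MeasurableSpace.comap_comp]
      apply MeasurableSpace.comap_mono
      rw [← measurable_iff_comap_le]
      exact measurable_pi_lambda _ fun a => measurable_pi_apply _
    exact indep_of_indep_of_le_left (indep_of_indep_of_le_right hI (hle T)) (hle S)
  have key : ∀ b, 0 < b → b ≤ 1/75 → β ≤ b → |(μ {ω | W ω ≤ z}).toReal - stdGaussianCDF z| ≤ 75 * b := by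
    intro b b0 b1 hb
    have hL : LD μ X' (m:ℝ) ((10 * (m:ℝ) + 1)^d) b :=
      LD.of_p hp.1 hp.2 (fun i => hXmeas i.1 i.2) (fun i => hXmean i.1 i.2) (fun i => hXp i.1 i.2) ind
        (Nat.cast_nonneg m) (fun i => card_box J m i) (one_le_pow₀ (by linarith [(Nat.cast_nonneg m : (0:ℝ) ≤ m)]))
        (by rw [hWf]; exact hWvar) b0 b1 hb
    have := hL.final z
    rwa [hWf] at this
  have triv : |(μ {ω | W ω ≤ z}).toReal - stdGaussianCDF z| ≤ 1 := by
    have h1 := cdf_bounds z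
    have h2 : (μ {ω | W ω ≤ z}).toReal ≤ 1 := measureReal_le_one
    have h3 : 0 ≤ (μ {ω | W ω ≤ z}).toReal := ENNReal.toReal_nonneg
    rw [abs_le]; constructor <;> linarith [h1.1, h1.2]
  by_contra hc
  push Not at hc
  set D := |(μ {ω | W ω ≤ z}).toReal - stdGaussianCDF z|
  have := key ((β + D/75)/2) (by linarith) (by linarith) (by linarith)
  linarith
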